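/- arXiv:1709.05322 — 3 statements merged into one kernel-verified Lean document; each statement's English description precedes it below -/
import Mathlib

section
/- Let H be an infinite-dimensional Hilbert space and let (a_k)_{k≥1} be a sequence of scalars satisfying sup_n (1/n)∑_{k=1}^n |a_k| < ∞. Then the following are equivalent: (i) for every weakly stable contraction T on H and every x ∈ H, ‖(1/n)∑_{k=1}^n a_k T^k x‖ → 0; (ii) there exist a weakly stable unitary operator U on H and some x ∈ H with x ≠ 0 such that ‖(1/n)∑_{k=1}^n a_k U^k x‖ → 0; (iii) |a_n| = o(n); (iv) (1/n²)∑_{k=1}^n |a_k|² → 0. -/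
open Filter Finset

/-!
For a contraction `T` the form `⟪u, y⟫ - ⟪Tʳ u, Tʳ y⟫` is positive semidefinite, so the
Cauchy–Schwarz inequality bounds it by `‖u‖ √(‖y‖² - ‖Tʳ y‖²)`. Since `‖Tⁿ x‖` converges, applying
this to `u = Tᵐ⁺ᴶ x`, `y = Tᴶ x` and `r = j - J` shows that weak stability makes `⟪Tᵐ⁺ʲ x, Tʲ x⟫`
tend to `0` as `m → ∞`, *uniformly* in `j`. The Gram matrix of an orbit is thus at most `ε` off a
band around the diagonal, and Schur's test on the band gives
`‖∑ aₖ Tᵏ x‖² ≤ ε (∑ |aₖ|)² + O(∑ |aₖ|²)`, which proves (iv) ⇒ (i).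

For (i) ⇒ (ii), permute an orthonormal basis without finite orbits. For (ii) ⇒ (iii), `aₙ Uⁿ x / n`
is a difference of consecutive averages up to `o(1)`, and `U` is isometric. For (iii) ⇒ (iv), the
average of `|aₖ|` being bounded and `|aₖ| / k → 0`, the average of `(|aₖ| / k) |aₖ|` tends to `0`,
and it dominates `n⁻² ∑ |aₖ|²`.
-/

open scoped Topology

section OrderedField

variable {ι R : Type*} [Field R] [LinearOrder R] [IsStrictOrderedRing R]

theorem sum_sum_mul_mul_le_mul_sum_sq {s : Finset ι} {w : ι → R} {K : ι → ι → R} {c : R}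
    (hK : ∀ i j, 0 ≤ K i j) (hsymm : ∀ i j, K i j = K j i) (hc : ∀ i ∈ s, ∑ j ∈ s, K i j ≤ c) :
    ∑ i ∈ s, ∑ j ∈ s, w i * w j * K i j ≤ c * ∑ i ∈ s, w i ^ 2 := by
  have amgm (i j : ι) : w i * w j * K i j ≤ w i ^ 2 / 2 * K i j + w j ^ 2 / 2 * K j i := by
    rw [hsymm j i, ← add_mul]
    exact mul_le_mul_of_nonneg_right (by nlinarith [sq_nonneg (w i - w j)]) (hK i j)
  calc ∑ i ∈ s, ∑ j ∈ s, w i * w j * K i j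
      ≤ ∑ i ∈ s, ∑ j ∈ s, (w i ^ 2 / 2 * K i j + w j ^ 2 / 2 * K j i) :=
        sum_le_sum fun i _ ↦ sum_le_sum fun j _ ↦ amgm i j
    _ = ∑ i ∈ s, w i ^ 2 * ∑ j ∈ s, K i j := by
        simp only [sum_add_distrib]
        rw [sum_comm (f := fun i j ↦ w j ^ 2 / 2 * K j i), ← sum_add_distrib]
        refine sum_congr rfl fun i _ ↦ ?_
        rw [← mul_sum, ← add_mul, add_halves]
    _ ≤ ∑ i ∈ s, w i ^ 2 * c :=
        sum_le_sum fun i hi ↦ mul_le_mul_of_nonneg_left (hc i hi) (sq_nonneg _)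
    _ = c * ∑ i ∈ s, w i ^ 2 := by rw [← sum_mul, mul_comm]

end OrderedField

theorem card_filter_lt_add_and_lt_add_le (s : Finset ℕ) (M j : ℕ) :
    #{k ∈ s | j < k + M ∧ k < j + M} ≤ 2 * M := by
  have hsub : {k ∈ s | j < k + M ∧ k < j + M} ⊆ Ico (j + 1 - M) (j + M) := by
    intro k hk
    simp only [mem_filter, mem_Ico] at hk ⊢
    omega
  have hcard := card_le_card hsub
  rw [Nat.card_Ico] at hcard
  omega

section Averages

theorem tendsto_average_mul_of_tendsto_zero {w r : ℕ → ℝ} {C : ℝ} (hw : ∀ k, 0 ≤ w k)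
    (hC : ∀ n : ℕ, (n : ℝ)⁻¹ * ∑ k ∈ Icc 1 n, w k ≤ C) (hr : Tendsto r atTop (𝓝 0)) :
    Tendsto (fun n : ℕ ↦ (n : ℝ)⁻¹ * ∑ k ∈ Icc 1 n, r k * w k) atTop (𝓝 0) := by
  have reindex (f : ℕ → ℝ) (n : ℕ) : ∑ k ∈ Icc 1 n, f k = ∑ k ∈ range n, f (1 + k) := by
    rw [← Ico_add_one_right_eq_Icc, sum_Ico_eq_sum_range, Nat.add_sub_cancel]
  -- The summand `1` makes the comparison series diverge, as `IsLittleO.sum_range` requires.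
  have hg (k : ℕ) : 0 ≤ w (1 + k) + 1 := add_nonneg (hw _) zero_le_one
  have hlittle : (fun k ↦ r (1 + k) * w (1 + k)) =o[atTop] fun k ↦ w (1 + k) + 1 := by
    have hr' : (fun k ↦ r (1 + k)) =o[atTop] fun _ ↦ (1 : ℝ) := by
      rw [Asymptotics.isLittleO_one_iff]
      exact hr.comp (tendsto_add_atTop_nat 1 |>.congr fun k ↦ add_comm k 1)
    refine (hr'.mul_isBigO (Asymptotics.isBigO_refl _ _)).trans_le fun k ↦ ?_
    rw [one_mul, Real.norm_of_nonneg (hw _), Real.norm_of_nonneg (hg k)]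
    exact le_add_of_nonneg_right zero_le_one
  have hsum (n : ℕ) : ∑ k ∈ range n, (w (1 + k) + 1) = ∑ k ∈ Icc 1 n, w k + n := by
    rw [sum_add_distrib, reindex w, sum_const, card_range, nsmul_one]
  have hdiv : Tendsto (fun n ↦ ∑ k ∈ range n, (w (1 + k) + 1)) atTop atTop := by
    refine tendsto_atTop_mono (fun n ↦ ?_) tendsto_natCast_atTop_atTop
    exact (hsum n).symm ▸ le_add_of_nonneg_left (sum_nonneg fun k _ ↦ hw k)
  have hbig : (fun n ↦ ∑ k ∈ range n, (w (1 + k) + 1)) =O[atTop] fun n : ℕ ↦ (n : ℝ) := by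
    refine .of_bound (C + 1) ?_
    filter_upwards [eventually_gt_atTop 0] with n hn
    have hle : ∑ k ∈ Icc 1 n, w k ≤ n * C := (inv_mul_le_iff₀ (Nat.cast_pos.2 hn)).1 (hC n)
    rw [Real.norm_of_nonneg (sum_nonneg fun k _ ↦ hg k), RCLike.norm_natCast, hsum]
    linarith
  simpa only [reindex, div_eq_inv_mul] using
    ((hlittle.sum_range hg hdiv).trans_isBigO hbig).tendsto_div_nhds_zero

variable {E : Type*} [SeminormedAddCommGroup E]

theorem tendsto_norm_div_of_tendsto_average {𝕜 : Type*} [RCLike 𝕜] [NormedSpace 𝕜 E] {b : ℕ → E}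
    (hb : Tendsto (fun n : ℕ ↦ ‖(n : 𝕜)⁻¹ • ∑ k ∈ Icc 1 n, b k‖) atTop (𝓝 0)) :
    Tendsto (fun n : ℕ ↦ ‖b n‖ / n) atTop (𝓝 0) := by
  set σ : ℕ → E := fun n ↦ (n : 𝕜)⁻¹ • ∑ k ∈ Icc 1 n, b k
  have sum_eq (n : ℕ) : ∑ k ∈ Icc 1 n, b k = (n : 𝕜) • σ n := by
    rcases eq_or_ne n 0 with rfl | hn
    · simp
    · exact (smul_inv_smul₀ (Nat.cast_ne_zero.2 hn) _).symm
  have eq_sub (n : ℕ) : b (n + 1) = ((n + 1 : ℕ) : 𝕜) • σ (n + 1) - (n : 𝕜) • σ n := by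
    rw [← sum_eq, ← sum_eq, sum_Icc_succ_top (by lia), add_sub_cancel_left]
  have norm_le (n : ℕ) : ‖b (n + 1)‖ ≤ (n + 1 : ℕ) * (‖σ (n + 1)‖ + ‖σ n‖) := by
    calc ‖b (n + 1)‖ ≤ (n + 1 : ℕ) * ‖σ (n + 1)‖ + n * ‖σ n‖ := by
          rw [eq_sub]
          refine (norm_sub_le _ _).trans_eq ?_
          rw [norm_smul (_ : 𝕜) (σ _), norm_smul (_ : 𝕜) (σ _), RCLike.norm_natCast,
            RCLike.norm_natCast]
      _ ≤ (n + 1 : ℕ) * (‖σ (n + 1)‖ + ‖σ n‖) := by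
          rw [mul_add]
          gcongr
          lia
  rw [← tendsto_add_atTop_iff_nat 1]
  refine squeeze_zero (fun n ↦ by positivity) (fun n ↦ ?_)
    (by simpa only [add_zero] using ((tendsto_add_atTop_iff_nat 1).2 hb).add hb)
  exact div_le_of_le_mul₀ (by positivity) (by positivity) ((norm_le n).trans_eq (mul_comm _ _))

theorem tendsto_inv_sq_mul_sum_norm_sq {a : ℕ → E} {C : ℝ}
    (hC : ∀ n : ℕ, (n : ℝ)⁻¹ * ∑ k ∈ Icc 1 n, ‖a k‖ ≤ C)
    (ha : Tendsto (fun n : ℕ ↦ ‖a n‖ / (n : ℝ)) atTop (𝓝 0)) :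
    Tendsto (fun n : ℕ ↦ ((n : ℝ) ^ 2)⁻¹ * ∑ k ∈ Icc 1 n, ‖a k‖ ^ 2) atTop (𝓝 0) := by
  have sq_le (n k : ℕ) (hk : k ∈ Icc 1 n) : ‖a k‖ ^ 2 ≤ n * (‖a k‖ / k * ‖a k‖) := by
    obtain ⟨hk0, hkn⟩ := mem_Icc.1 hk
    have : (0 : ℝ) < k := by exact_mod_cast hk0
    calc ‖a k‖ ^ 2 = k * (‖a k‖ / k * ‖a k‖) := by field_simp
      _ ≤ n * (‖a k‖ / k * ‖a k‖) := by gcongr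
  refine squeeze_zero (fun n ↦ by positivity) (fun n ↦ ?_)
    (tendsto_average_mul_of_tendsto_zero (fun k ↦ norm_nonneg (a k)) hC ha)
  calc ((n : ℝ) ^ 2)⁻¹ * ∑ k ∈ Icc 1 n, ‖a k‖ ^ 2
      ≤ ((n : ℝ) ^ 2)⁻¹ * (n * ∑ k ∈ Icc 1 n, ‖a k‖ / k * ‖a k‖) := by
        rw [mul_sum _ _ (n : ℝ)]
        exact mul_le_mul_of_nonneg_left (sum_le_sum (sq_le n)) (by positivity)
    _ = (n : ℝ)⁻¹ * ∑ k ∈ Icc 1 n, ‖a k‖ / k * ‖a k‖ := by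
        rcases eq_or_ne n 0 with rfl | hn
        · simp
        · field_simp

end Averages

section InnerProductSpace

variable {𝕜 E F : Type*} [RCLike 𝕜] [SeminormedAddCommGroup E] [InnerProductSpace 𝕜 E]
  [SeminormedAddCommGroup F] [InnerProductSpace 𝕜 F]

theorem norm_sum_sq_le_sum_sum_norm_inner {ι : Type*} (s : Finset ι) (b : ι → E) :
    ‖∑ i ∈ s, b i‖ ^ 2 ≤ ∑ i ∈ s, ∑ j ∈ s, ‖(inner 𝕜 (b i) (b j) : 𝕜)‖ := by
  have hsq : ‖∑ i ∈ s, b i‖ ^ 2 = ‖(inner 𝕜 (∑ i ∈ s, b i) (∑ i ∈ s, b i) : 𝕜)‖ := by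
    rw [inner_self_eq_norm_sq_to_K, norm_pow, RCLike.norm_ofReal, abs_norm]
  rw [hsq, sum_inner]
  refine (norm_sum_le _ _).trans (sum_le_sum fun i _ ↦ ?_)
  rw [inner_sum]
  exact norm_sum_le _ _

theorem norm_inner_le_add_mul_ite {v : ℕ → E} {B ε : ℝ} {M : ℕ} (hB : ∀ k, ‖v k‖ ≤ B) (hε : 0 ≤ ε)
    (hv : ∀ m ≥ M, ∀ j, ‖(inner 𝕜 (v (m + j)) (v j) : 𝕜)‖ ≤ ε) (j k : ℕ) :
    ‖(inner 𝕜 (v j) (v k) : 𝕜)‖ ≤ ε + B ^ 2 * if j < k + M ∧ k < j + M then 1 else 0 := by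
  split_ifs with h
  · calc ‖(inner 𝕜 (v j) (v k) : 𝕜)‖ ≤ ‖v j‖ * ‖v k‖ := norm_inner_le_norm _ _
      _ ≤ B * B :=
          mul_le_mul (hB j) (hB k) (norm_nonneg _) ((norm_nonneg _).trans (hB j))
      _ ≤ ε + B ^ 2 * 1 := by linarith
  · rw [mul_zero, add_zero]
    rcases Nat.lt_or_ge j (k + M) with hjk | hjk
    · obtain ⟨m, rfl⟩ := Nat.exists_eq_add_of_le' (show j ≤ k by lia)
      rw [norm_inner_symm]
      exact hv m (by lia) j
    · obtain ⟨m, rfl⟩ := Nat.exists_eq_add_of_le' (show k ≤ j by lia)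
      exact hv m (by lia) k

theorem norm_sum_smul_sq_le {v : ℕ → E} {B ε : ℝ} {M : ℕ} (hB : ∀ k, ‖v k‖ ≤ B) (hε : 0 ≤ ε)
    (hv : ∀ m ≥ M, ∀ j, ‖(inner 𝕜 (v (m + j)) (v j) : 𝕜)‖ ≤ ε) (s : Finset ℕ) (a : ℕ → 𝕜) :
    ‖∑ k ∈ s, a k • v k‖ ^ 2 ≤
      ε * (∑ k ∈ s, ‖a k‖) ^ 2 + 2 * M * B ^ 2 * ∑ k ∈ s, ‖a k‖ ^ 2 := by
  let near (j k : ℕ) : ℝ := if j < k + M ∧ k < j + M then 1 else 0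
  have near_nonneg (j k : ℕ) : 0 ≤ near j k := ite_nonneg zero_le_one le_rfl
  have schur : ∑ j ∈ s, ∑ k ∈ s, ‖a j‖ * ‖a k‖ * near j k ≤ 2 * M * ∑ k ∈ s, ‖a k‖ ^ 2 := by
    refine sum_sum_mul_mul_le_mul_sum_sq near_nonneg (fun j k ↦ by simp only [near, and_comm]) ?_
    intro j _
    rw [sum_boole]
    exact_mod_cast card_filter_lt_add_and_lt_add_le s M j
  calc ‖∑ k ∈ s, a k • v k‖ ^ 2
      ≤ ∑ j ∈ s, ∑ k ∈ s, ‖(inner 𝕜 (a j • v j) (a k • v k) : 𝕜)‖ :=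
        norm_sum_sq_le_sum_sum_norm_inner s _
    _ = ∑ j ∈ s, ∑ k ∈ s, ‖a j‖ * ‖a k‖ * ‖(inner 𝕜 (v j) (v k) : 𝕜)‖ := by
        refine sum_congr rfl fun j _ ↦ sum_congr rfl fun k _ ↦ ?_
        rw [inner_smul_left, inner_smul_right, norm_mul, norm_mul, RCLike.norm_conj, mul_assoc]
    _ ≤ ∑ j ∈ s, ∑ k ∈ s, ‖a j‖ * ‖a k‖ * (ε + B ^ 2 * near j k) := by
        gcongr
        exact norm_inner_le_add_mul_ite hB hε hv _ _
    _ = ε * (∑ k ∈ s, ‖a k‖) ^ 2 + B ^ 2 * ∑ j ∈ s, ∑ k ∈ s, ‖a j‖ * ‖a k‖ * near j k := by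
        rw [sq (∑ k ∈ s, ‖a k‖), sum_mul_sum]
        simp only [mul_sum, ← sum_add_distrib]
        refine sum_congr rfl fun j _ ↦ sum_congr rfl fun k _ ↦ ?_
        ring
    _ ≤ ε * (∑ k ∈ s, ‖a k‖) ^ 2 + 2 * M * B ^ 2 * ∑ k ∈ s, ‖a k‖ ^ 2 := by
        rw [mul_comm (2 * (M : ℝ)), mul_assoc (B ^ 2)]
        gcongr

theorem tendsto_average_smul_of_tendstoUniformly_inner {v : ℕ → E} {B C : ℝ} {a : ℕ → 𝕜}
    (hB : ∀ k, ‖v k‖ ≤ B)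
    (hv : TendstoUniformly (fun m j ↦ (inner 𝕜 (v (m + j)) (v j) : 𝕜)) 0 atTop)
    (hC : ∀ n : ℕ, (n : ℝ)⁻¹ * ∑ k ∈ Icc 1 n, ‖a k‖ ≤ C)
    (ha : Tendsto (fun n : ℕ ↦ ((n : ℝ) ^ 2)⁻¹ * ∑ k ∈ Icc 1 n, ‖a k‖ ^ 2) atTop (𝓝 0)) :
    Tendsto (fun n : ℕ ↦ ‖(n : 𝕜)⁻¹ • ∑ k ∈ Icc 1 n, a k • v k‖) atTop (𝓝 0) := by
  have inner_bound (ε : ℝ) (hε : 0 < ε) : ∃ D, ∀ n : ℕ,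
      ‖(n : 𝕜)⁻¹ • ∑ k ∈ Icc 1 n, a k • v k‖ ^ 2 ≤
        ε * C ^ 2 + D * (((n : ℝ) ^ 2)⁻¹ * ∑ k ∈ Icc 1 n, ‖a k‖ ^ 2) := by
    obtain ⟨M, hM⟩ := eventually_atTop.1 (Metric.tendstoUniformly_iff.1 hv ε hε)
    refine ⟨2 * M * B ^ 2, fun n ↦ ?_⟩
    have hsum := norm_sum_smul_sq_le hB hε.le
      (fun m hm j ↦ by simpa only [Pi.zero_apply, dist_zero_left] using (hM m hm j).le) (Icc 1 n) a
    calc ‖(n : 𝕜)⁻¹ • ∑ k ∈ Icc 1 n, a k • v k‖ ^ 2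
        = ((n : ℝ) ^ 2)⁻¹ * ‖∑ k ∈ Icc 1 n, a k • v k‖ ^ 2 := by
          rw [norm_smul, mul_pow, norm_inv, RCLike.norm_natCast, inv_pow]
      _ ≤ ((n : ℝ) ^ 2)⁻¹ * (ε * (∑ k ∈ Icc 1 n, ‖a k‖) ^ 2 +
            2 * M * B ^ 2 * ∑ k ∈ Icc 1 n, ‖a k‖ ^ 2) := by gcongr
      _ = ε * ((n : ℝ)⁻¹ * ∑ k ∈ Icc 1 n, ‖a k‖) ^ 2 +
            2 * M * B ^ 2 * (((n : ℝ) ^ 2)⁻¹ * ∑ k ∈ Icc 1 n, ‖a k‖ ^ 2) := by ring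
      _ ≤ ε * C ^ 2 + 2 * M * B ^ 2 * (((n : ℝ) ^ 2)⁻¹ * ∑ k ∈ Icc 1 n, ‖a k‖ ^ 2) := by
          gcongr
          exact hC n
  have hsq : Tendsto (fun n : ℕ ↦ ‖(n : 𝕜)⁻¹ • ∑ k ∈ Icc 1 n, a k • v k‖ ^ 2) atTop (𝓝 0) := by
    refine tendsto_order.2 ⟨fun b hb ↦ .of_forall fun n ↦ hb.trans_le (sq_nonneg _), fun b hb ↦ ?_⟩
    obtain ⟨ε, hε, hεb⟩ : ∃ ε > 0, ε * C ^ 2 < b := by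
      obtain ⟨ε, hε, hεb⟩ := exists_pos_mul_lt hb (C ^ 2)
      exact ⟨ε, hε, by rwa [mul_comm]⟩
    obtain ⟨D, hD⟩ := inner_bound ε hε
    have hlim := (ha.const_mul D).const_add (ε * C ^ 2)
    rw [mul_zero, add_zero] at hlim
    filter_upwards [hlim.eventually_lt_const hεb] with n hn using (hD n).trans_lt hn
  simpa only [Real.sqrt_sq (norm_nonneg _), Real.sqrt_zero] using hsq.sqrt

theorem norm_inner_sub_inner_map_map_sq_le {R : E →L[𝕜] F} (hR : ‖R‖ ≤ 1) (u y : E) :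
    ‖(inner 𝕜 u y - inner 𝕜 (R u) (R y) : 𝕜)‖ ^ 2 ≤
      (‖u‖ ^ 2 - ‖R u‖ ^ 2) * (‖y‖ ^ 2 - ‖R y‖ ^ 2) := by
  have map_sq_le (z : E) : ‖R z‖ ^ 2 ≤ ‖z‖ ^ 2 := by
    gcongr
    simpa only [one_mul] using R.le_of_opNorm_le hR z
  let defect : PreInnerProductSpace.Core 𝕜 E :=
    { inner := fun u y ↦ inner 𝕜 u y - inner 𝕜 (R u) (R y)
      conj_inner_symm := fun u y ↦ by simp only [map_sub, inner_conj_symm]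
      re_inner_nonneg := fun u ↦ by
        simpa only [map_sub, inner_self_eq_norm_sq, sub_nonneg] using map_sq_le u
      add_left := fun u v y ↦ by simp only [map_add, inner_add_left]; ring
      smul_left := fun u y r ↦ by simp only [map_smul, inner_smul_left]; ring }
  have cauchy_schwarz :
      ‖(inner 𝕜 u y - inner 𝕜 (R u) (R y) : 𝕜)‖ * ‖(inner 𝕜 y u - inner 𝕜 (R y) (R u) : 𝕜)‖ ≤
        RCLike.re (inner 𝕜 u u - inner 𝕜 (R u) (R u)) *
          RCLike.re (inner 𝕜 y y - inner 𝕜 (R y) (R y)) :=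
    InnerProductSpace.Core.inner_mul_inner_self_le (c := defect) u y
  have norm_symm : ‖(inner 𝕜 y u - inner 𝕜 (R y) (R u) : 𝕜)‖ =
      ‖(inner 𝕜 u y - inner 𝕜 (R u) (R y) : 𝕜)‖ := by
    rw [← RCLike.norm_conj, map_sub, inner_conj_symm, inner_conj_symm]
  simpa only [norm_symm, ← sq, map_sub, inner_self_eq_norm_sq] using cauchy_schwarz

theorem norm_inner_map_map_le {R : E →L[𝕜] F} (hR : ‖R‖ ≤ 1) (u y : E) :
    ‖(inner 𝕜 (R u) (R y) : 𝕜)‖ ≤ ‖(inner 𝕜 u y : 𝕜)‖ + ‖u‖ * √(‖y‖ ^ 2 - ‖R y‖ ^ 2) := by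
  have hRy : ‖R y‖ ^ 2 ≤ ‖y‖ ^ 2 := by
    gcongr
    simpa only [one_mul] using R.le_of_opNorm_le hR y
  have hsub : ‖(inner 𝕜 u y - inner 𝕜 (R u) (R y) : 𝕜)‖ ≤ ‖u‖ * √(‖y‖ ^ 2 - ‖R y‖ ^ 2) := by
    refine abs_le_of_sq_le_sq' ?_ (by positivity) |>.2
    rw [mul_pow, Real.sq_sqrt (sub_nonneg.2 hRy)]
    refine (norm_inner_sub_inner_map_map_sq_le hR u y).trans ?_
    exact mul_le_mul_of_nonneg_right (sub_le_self _ (sq_nonneg _)) (sub_nonneg.2 hRy)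
  calc ‖(inner 𝕜 (R u) (R y) : 𝕜)‖
      ≤ ‖(inner 𝕜 u y : 𝕜)‖ + ‖(inner 𝕜 u y - inner 𝕜 (R u) (R y) : 𝕜)‖ := norm_le_insert _ _
    _ ≤ _ := by gcongr

/-- Weak stability of a power-bounded operator: its powers tend to `0` in the weak operator
topology, expressed through inner products. -/
def WeaklyStable (T : E →L[𝕜] E) : Prop :=
  ∀ x y : E, Tendsto (fun n : ℕ ↦ (inner 𝕜 ((T ^ n) x) y : 𝕜)) atTop (𝓝 0)

theorem antitone_norm_pow_apply {T : E →L[𝕜] E} (hT : ‖T‖ ≤ 1) (x : E) :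
    Antitone fun n : ℕ ↦ ‖(T ^ n) x‖ :=
  antitone_nat_of_succ_le fun n ↦ by
    simpa only [pow_succ', mul_apply_eq_comp, one_mul] using
      T.le_of_opNorm_le hT ((T ^ n) x)

theorem norm_pow_apply_le {T : E →L[𝕜] E} (hT : ‖T‖ ≤ 1) (n : ℕ) (x : E) :
    ‖(T ^ n) x‖ ≤ ‖x‖ :=
  antitone_norm_pow_apply hT x n.zero_le

theorem norm_inner_pow_add_apply_le {T : E →L[𝕜] E} (hT : ‖T‖ ≤ 1) (x : E) {J j : ℕ}
    (hJ : J ≤ j) (m : ℕ) :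
    ‖(inner 𝕜 ((T ^ (m + j)) x) ((T ^ j) x) : 𝕜)‖ ≤
      ‖(inner 𝕜 ((T ^ (m + J)) x) ((T ^ J) x) : 𝕜)‖ +
        ‖x‖ * √(‖(T ^ J) x‖ ^ 2 - ‖(T ^ j) x‖ ^ 2) := by
  obtain ⟨r, rfl⟩ := Nat.exists_eq_add_of_le' hJ
  have hTr : ‖T ^ r‖ ≤ 1 :=
    (T ^ r).opNorm_le_bound zero_le_one fun z ↦ (norm_pow_apply_le hT r z).trans_eq (one_mul _).symm
  have hle := norm_inner_map_map_le hTr ((T ^ (m + J)) x) ((T ^ J) x)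
  rw [← mul_apply_eq_comp, ← mul_apply_eq_comp, ← pow_add, ← pow_add, add_left_comm] at hle
  grw [hle, norm_pow_apply_le hT (m + J) x]

theorem WeaklyStable.tendstoUniformly_inner {T : E →L[𝕜] E} (hw : WeaklyStable T) (hT : ‖T‖ ≤ 1)
    (x : E) :
    TendstoUniformly (fun m j : ℕ ↦ (inner 𝕜 ((T ^ (m + j)) x) ((T ^ j) x) : 𝕜)) 0 atTop := by
  have hanti : Antitone fun n : ℕ ↦ ‖(T ^ n) x‖ ^ 2 := fun m n hmn ↦
    pow_le_pow_left₀ (norm_nonneg _) (antitone_norm_pow_apply hT x hmn) 2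
  have hbdd : BddBelow (Set.range fun n : ℕ ↦ ‖(T ^ n) x‖ ^ 2) :=
    ⟨0, Set.forall_mem_range.2 fun n ↦ sq_nonneg _⟩
  set L := ⨅ n : ℕ, ‖(T ^ n) x‖ ^ 2
  have hdefect : Tendsto (fun J ↦ ‖x‖ * √(‖(T ^ J) x‖ ^ 2 - L)) atTop (𝓝 0) := by
    have := ((tendsto_atTop_ciInf hanti hbdd).sub_const L).sqrt.const_mul ‖x‖
    rwa [sub_self, Real.sqrt_zero, mul_zero] at this
  refine Metric.tendstoUniformly_iff.2 fun ε hε ↦ ?_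
  obtain ⟨J, hJ⟩ := (hdefect.eventually_lt_const (half_pos hε)).exists
  have hfinite : ∀ᶠ m in atTop, ∀ j ∈ Set.Iic J,
      ‖(inner 𝕜 ((T ^ (m + j)) x) ((T ^ j) x) : 𝕜)‖ < ε / 2 := by
    refine (Set.finite_Iic J).eventually_all.2 fun j _ ↦ ?_
    have := (hw ((T ^ j) x) ((T ^ j) x)).norm.eventually_lt_const
      (show ‖(0 : 𝕜)‖ < ε / 2 by rw [norm_zero]; exact half_pos hε)
    simpa only [pow_add, mul_apply_eq_comp] using this
  filter_upwards [hfinite] with m hm j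
  rw [Pi.zero_apply, dist_zero_left]
  rcases le_total j J with hj | hj
  · exact (hm j hj).trans (half_lt_self hε)
  · calc ‖(inner 𝕜 ((T ^ (m + j)) x) ((T ^ j) x) : 𝕜)‖
        ≤ ‖(inner 𝕜 ((T ^ (m + J)) x) ((T ^ J) x) : 𝕜)‖ +
            ‖x‖ * √(‖(T ^ J) x‖ ^ 2 - ‖(T ^ j) x‖ ^ 2) := norm_inner_pow_add_apply_le hT x hj m
      _ ≤ ‖(inner 𝕜 ((T ^ (m + J)) x) ((T ^ J) x) : 𝕜)‖ + ‖x‖ * √(‖(T ^ J) x‖ ^ 2 - L) := by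
          gcongr
          exact ciInf_le hbdd j
      _ < ε := by linarith [hm J Set.self_mem_Iic]

theorem isClosed_setOf_tendsto_inner_pow_apply {T : E →L[𝕜] E} (hT : ‖T‖ ≤ 1) (y : E) :
    IsClosed {x : E | Tendsto (fun n : ℕ ↦ (inner 𝕜 ((T ^ n) x) y : 𝕜)) atTop (𝓝 0)} := by
  have lipschitz (n : ℕ) : LipschitzWith ‖y‖₊ fun x ↦ (inner 𝕜 ((T ^ n) x) y : 𝕜) :=
    LipschitzWith.of_dist_le_mul fun u v ↦ by
      rw [dist_eq_norm, ← inner_sub_left, ← map_sub, dist_eq_norm, coe_nnnorm, mul_comm]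
      grw [norm_inner_le_norm, norm_pow_apply_le hT]
  have equicontinuous := (LipschitzWith.uniformEquicontinuous _ _ lipschitz).equicontinuous
  exact equicontinuous.isClosed_setOfPred_tendsto continuous_const

theorem weaklyStable_of_dense_span {T : E →L[𝕜] E} (hT : ‖T‖ ≤ 1) {s : Set E}
    (hs : Dense (Submodule.span 𝕜 s : Set E))
    (h : ∀ x ∈ s, ∀ y : E, Tendsto (fun n : ℕ ↦ (inner 𝕜 ((T ^ n) x) y : 𝕜)) atTop (𝓝 0)) :
    WeaklyStable T := by
  intro x y
  refine hs.induction ?_ (isClosed_setOf_tendsto_inner_pow_apply hT y) x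
  intro z hz
  induction hz using Submodule.span_induction with
  | mem z hz => exact h z hz y
  | zero => simp only [map_zero, inner_zero_left, tendsto_const_nhds]
  | add u v _ _ hu hv => simpa only [map_add, inner_add_left, add_zero] using hu.add hv
  | smul c u _ hu =>
    simpa only [map_smul, inner_smul_left, mul_zero] using hu.const_mul (starRingEnd 𝕜 c)

theorem tendsto_inner_cofinite_of_orthonormal {ι : Type*} {v : ι → E} (hv : Orthonormal 𝕜 v)
    (y : E) :
    Tendsto (fun i ↦ (inner 𝕜 (v i) y : 𝕜)) cofinite (𝓝 0) := by
  have := (hv.inner_products_summable y).tendsto_cofinite_zero.sqrt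
  rw [tendsto_zero_iff_norm_tendsto_zero]
  simpa only [Real.sqrt_sq (norm_nonneg _), Real.sqrt_zero] using this

end InnerProductSpace

theorem exists_perm_forall_injective_pow_apply (ι : Type*) [Infinite ι] :
    ∃ e : Equiv.Perm ι, ∀ i, Function.Injective fun n : ℕ ↦ (e ^ n) i := by
  -- Nonzero translations of the torsion-free group `ι →₀ ℤ`, equipotent to `ι`, have no finite
  -- orbits.
  obtain ⟨f⟩ : Nonempty ((ι →₀ ℤ) ≃ ι) := Cardinal.eq.1 <| by
    simp [Cardinal.mk_finsupp_lift_of_infinite]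
  obtain ⟨c, hc⟩ := exists_ne (0 : ι →₀ ℤ)
  have nsmul_inj : Function.Injective fun n : ℕ ↦ n • c :=
    injective_nsmul_iff_not_isOfFinAddOrder.2 (not_isOfFinAddOrder_of_isAddTorsionFree hc)
  refine ⟨f.permCongrHom (Equiv.addRight c), fun i m n hmn ↦ ?_⟩
  have hshift (n : ℕ) : (f.permCongrHom (Equiv.addRight c) ^ n) i = f (f.symm i + n • c) := by
    rw [← map_pow, Equiv.permCongrHom_coe, Equiv.permCongr_apply, ← Equiv.Perm.iterate_eq_pow,
      Equiv.coe_addRight, add_right_iterate]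
  exact nsmul_inj (add_left_cancel (f.injective ((hshift m).symm.trans (hmn.trans (hshift n)))))

section HilbertSpace

variable {ι 𝕜 H : Type*} [RCLike 𝕜] [NormedAddCommGroup H] [InnerProductSpace 𝕜 H]

theorem infinite_of_hilbertBasis (hH : ¬ FiniteDimensional 𝕜 H) (b : HilbertBasis ι 𝕜 H) :
    Infinite ι := by
  refine not_finite_iff_infinite.1 fun hfin ↦ hH ?_
  have := Fintype.ofFinite ι
  exact b.toOrthonormalBasis.toBasis.finiteDimensional_of_finite

variable [CompleteSpace H]

theorem norm_le_one_of_mem_unitary {U : H →L[𝕜] H} (hU : U ∈ unitary (H →L[𝕜] H)) : ‖U‖ ≤ 1 :=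
  U.opNorm_le_bound zero_le_one fun x ↦ by
    rw [ContinuousLinearMap.norm_map_of_mem_unitary hU, one_mul]

/-- The unitary operator `b i ↦ b (e i)` permuting the vectors of a Hilbert basis `b`. For `e`
without finite orbits it is a weakly stable unitary, e.g. the bilateral shift. -/
noncomputable def permUnitary (b : HilbertBasis ι 𝕜 H) (e : Equiv.Perm ι) : unitary (H →L[𝕜] H) :=
  Unitary.linearIsometryEquiv.symm <|
    b.repr.trans (HilbertBasis.mk (b.orthonormal.comp e e.injective)
      (by rw [e.surjective.range_comp b, b.dense_span])).repr.symm

theorem permUnitary_apply (b : HilbertBasis ι 𝕜 H) (e : Equiv.Perm ι) (i : ι) :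
    (permUnitary b e : H →L[𝕜] H) (b i) = b (e i) := by
  classical
  simp [permUnitary, HilbertBasis.repr_self, HilbertBasis.repr_symm_single]

theorem permUnitary_pow_apply (b : HilbertBasis ι 𝕜 H) (e : Equiv.Perm ι) (n : ℕ) (i : ι) :
    ((permUnitary b e : H →L[𝕜] H) ^ n) (b i) = b ((e ^ n) i) := by
  induction n with
  | zero => rfl
  | succ n ih =>
    rw [pow_succ', mul_apply_eq_comp, ih, permUnitary_apply, pow_succ', Equiv.Perm.mul_apply]

theorem weaklyStable_permUnitary (b : HilbertBasis ι 𝕜 H) {e : Equiv.Perm ι}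
    (he : ∀ i, Function.Injective fun n : ℕ ↦ (e ^ n) i) :
    WeaklyStable (permUnitary b e : H →L[𝕜] H) := by
  refine weaklyStable_of_dense_span (norm_le_one_of_mem_unitary (permUnitary b e).2)
    (Submodule.dense_iff_topologicalClosure_eq_top.2 b.dense_span) ?_
  rintro _ ⟨i, rfl⟩ y
  simp only [permUnitary_pow_apply]
  exact (tendsto_inner_cofinite_of_orthonormal b.orthonormal y).comp
    (Nat.cofinite_eq_atTop ▸ (he i).tendsto_cofinite)

theorem exists_weaklyStable_mem_unitary (hH : ¬ FiniteDimensional 𝕜 H) :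
    ∃ U ∈ unitary (H →L[𝕜] H), WeaklyStable U := by
  obtain ⟨w, b, -⟩ := exists_hilbertBasis 𝕜 H
  have := infinite_of_hilbertBasis hH b
  obtain ⟨e, he⟩ := exists_perm_forall_injective_pow_apply w
  exact ⟨permUnitary b e, (permUnitary b e).2, weaklyStable_permUnitary b he⟩

end HilbertSpace

/-- Let `H` be an infinite-dimensional Hilbert space and `(a_k)` scalars with
`sup_n (1/n) ∑_{k=1}^n |a_k| < ∞`. TFAE:
(i) for every weakly stable contraction `T` on `H` and every `x`,
`‖(1/n) ∑_{k=1}^n a_k T^k x‖ → 0`;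
(ii) there are a weakly stable unitary `U` on `H` and `x ≠ 0` with
`‖(1/n) ∑_{k=1}^n a_k U^k x‖ → 0`;
(iii) `|a_n| = o(n)`;
(iv) `(1/n²) ∑_{k=1}^n |a_k|² → 0`. -/
theorem stmt8 {𝕜 : Type*} [RCLike 𝕜] {H : Type*} [NormedAddCommGroup H]
    [InnerProductSpace 𝕜 H] [CompleteSpace H] (hH : ¬ FiniteDimensional 𝕜 H)
    (a : ℕ → 𝕜)
    (ha_bdd : ∃ C : ℝ, ∀ n : ℕ, (n : ℝ)⁻¹ * ∑ k ∈ Icc 1 n, ‖a k‖ ≤ C) :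
    List.TFAE
      [∀ T : H →L[𝕜] H, ‖T‖ ≤ 1 →
        (∀ x y : H, Tendsto (fun n : ℕ => (inner 𝕜 ((T ^ n) x) y : 𝕜)) atTop (nhds 0)) →
        ∀ x : H,
          Tendsto (fun n : ℕ => ‖(n : 𝕜)⁻¹ • ∑ k ∈ Icc 1 n, a k • (T ^ k) x‖)
            atTop (nhds 0),
       ∃ U : H →L[𝕜] H, U ∈ unitary (H →L[𝕜] H) ∧
        (∀ x y : H, Tendsto (fun n : ℕ => (inner 𝕜 ((U ^ n) x) y : 𝕜)) atTop (nhds 0)) ∧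
        ∃ x : H, x ≠ 0 ∧
          Tendsto (fun n : ℕ => ‖(n : 𝕜)⁻¹ • ∑ k ∈ Icc 1 n, a k • (U ^ k) x‖)
            atTop (nhds 0),
       Tendsto (fun n : ℕ => ‖a n‖ / (n : ℝ)) atTop (nhds 0),
       Tendsto (fun n : ℕ => ((n : ℝ) ^ 2)⁻¹ * ∑ k ∈ Icc 1 n, ‖a k‖ ^ 2)
         atTop (nhds 0)] := by
  obtain ⟨C, hC⟩ := ha_bdd
  tfae_have 1 → 2 := fun h ↦ by
    obtain ⟨U, hU, hw⟩ := exists_weaklyStable_mem_unitary hH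
    have : Nontrivial H := not_subsingleton_iff_nontrivial.1 fun _ ↦ hH inferInstance
    obtain ⟨x, hx⟩ := exists_ne (0 : H)
    exact ⟨U, hU, hw, x, hx, h U (norm_le_one_of_mem_unitary hU) hw x⟩
  tfae_have 2 → 3 := fun ⟨U, hU, _, x, hx, h⟩ ↦ by
    have norm_eq (n : ℕ) : ‖a n • (U ^ n) x‖ = ‖a n‖ * ‖x‖ := by
      rw [norm_smul, ContinuousLinearMap.norm_map_of_mem_unitary (pow_mem hU n)]
    have hlim := (tendsto_norm_div_of_tendsto_average h).div_const ‖x‖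
    simpa only [norm_eq, mul_div_right_comm, mul_div_cancel_right₀ _ (norm_ne_zero_iff.2 hx),
      zero_div] using hlim
  tfae_have 3 → 4 := tendsto_inv_sq_mul_sum_norm_sq hC
  tfae_have 4 → 1 := fun h T hT hw x ↦
    tendsto_average_smul_of_tendstoUniformly_inner (fun n ↦ norm_pow_apply_le hT n x)
      (WeaklyStable.tendstoUniformly_inner hw hT x) hC h
  tfae_finish
end

section
/- Let (a_n)_{n≥1} be a sequence of complex numbers. If for every complex Hilbert space H, every unitary operator T on H, and every flight vector x of T the sequence (1/n)∑_{k=1}^n a_k T^k x converges weakly, then a_n = o(n), i.e. |a_n|/n → 0. -/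
open Filter Finset

universe u

/-!
Suppose `‖a n‖ / n` does not tend to zero and choose a very sparse sequence `m j` along which it
stays above some `ε > 0`. The Riesz product `∏ j, (1 + cos (m j * t))` is a positive measure whose
Fourier coefficients equal `1 / 2` at each `m j` and vanish near `2 * m j`. They form a positive
semidefinite Toeplitz kernel, hence the Gram matrix of an orbit `T ^ n x` of a unitary operator;
`x` is a flight vector along `2 * m j`, while `⟪x, T ^ m j x⟫ = 1 / 2`. But if the averages of
`a k * ⟪x, T ^ k x⟫` converge, then `a n * ⟪x, T ^ n x⟫ / n → 0`, which fails along `m j`.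
-/

open scoped Topology ComplexOrder

universe w

section Gram

variable {𝕜 : Type w} [RCLike 𝕜]

theorem inner_linearCombination_self {X H : Type*} [SeminormedAddCommGroup H]
    [InnerProductSpace 𝕜 H] (v : X → H) (c : X →₀ 𝕜) :
    inner 𝕜 (Finsupp.linearCombination 𝕜 v c) (Finsupp.linearCombination 𝕜 v c) =
      c.sum fun i a => c.sum fun j b => star a * Matrix.gram 𝕜 v i j * b := by
  rw [Finsupp.linearCombination_apply, Finsupp.sum_inner]
  simp only [Finsupp.inner_sum]
  refine sum_congr rfl fun i _ => sum_congr rfl fun j _ => ?_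
  simp only [inner_smul_left, inner_smul_right, Matrix.gram_apply, RCLike.star_def]
  ring

theorem posSemidef_gram {X H : Type*} [SeminormedAddCommGroup H] [InnerProductSpace 𝕜 H]
    (v : X → H) : (Matrix.gram 𝕜 v).PosSemidef :=
  ⟨Matrix.isHermitian_gram 𝕜 v, fun c => by
    rw [← inner_linearCombination_self, RCLike.nonneg_iff]
    exact ⟨inner_self_nonneg, inner_self_im _⟩⟩

theorem posSemidef_of_tendsto {ι X : Type*} {l : Filter ι} [l.NeBot] {L : ι → Matrix X X 𝕜}
    {K : Matrix X X 𝕜} (hL : ∀ k, (L k).PosSemidef)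
    (hlim : ∀ i j, Tendsto (fun k => L k i j) l (𝓝 (K i j))) : K.PosSemidef := by
  refine ⟨Matrix.IsHermitian.ext fun i j => ?_, fun x => ?_⟩
  · refine tendsto_nhds_unique ((hlim j i).star.congr fun k => ?_) (hlim i j)
    exact (hL k).isHermitian.apply i j
  · refine ge_of_tendsto' (x := l) ?_ fun k => (hL k).2 x
    exact tendsto_finsetSum x.support fun i _ => tendsto_finsetSum x.support fun j _ =>
      ((hlim i j).const_mul _).mul_const _

theorem inner_smul_id_apply (z a b : 𝕜) :
    inner 𝕜 ((z • ContinuousLinearMap.id 𝕜 𝕜) a) b = star a * star z * b := by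
  simp only [FunLike.coe_smul, Pi.smul_apply, ContinuousLinearMap.id_apply,
    smul_eq_mul, RCLike.inner_apply, map_mul, RCLike.star_def]
  ring

theorem posSemidef_smul_id {X : Type*} {K : Matrix X X 𝕜} (hK : K.PosSemidef) :
    (K.map fun z => z • ContinuousLinearMap.id 𝕜 𝕜).PosSemidef := by
  have psd_iff := (RKHS.posSemidef_tfae (K := K.map fun z => z • .id 𝕜 𝕜)).out 0 2
  refine psd_iff.2 ⟨Matrix.IsHermitian.ext fun i j => ?_, fun c => ?_⟩
  · rw [Matrix.map_apply, Matrix.map_apply, star_smul, hK.isHermitian.apply]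
    exact congrArg _ ContinuousLinearMap.adjoint_id
  · simp only [Matrix.map_apply, inner_smul_id_apply, hK.isHermitian.apply]
    exact (RCLike.nonneg_iff.1 (hK.2 c)).1

theorem exists_gram_eq_of_posSemidef {X : Type u} {K : Matrix X X 𝕜} (hK : K.PosSemidef) :
    ∃ (H : Type (max u w)) (_ : NormedAddCommGroup H) (_ : InnerProductSpace 𝕜 H)
      (_ : CompleteSpace H) (v : X → H),
      Matrix.gram 𝕜 v = K ∧ Dense (Submodule.span 𝕜 (Set.range v) : Set H) := by
  let L : Matrix X X (𝕜 →L[𝕜] 𝕜) := K.map fun z => z • .id 𝕜 𝕜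
  have : Fact L.PosSemidef := ⟨posSemidef_smul_id hK⟩
  let H := RKHS.OfKernel L
  let v : X → H := fun i => RKHS.kerFun H i 1
  have kerFun_eq_smul (i : X) (c : 𝕜) : RKHS.kerFun H i c = c • v i := by
    rw [← map_smul, smul_eq_mul, mul_one]
  refine ⟨H, inferInstance, inferInstance, inferInstance, v, ?_, ?_⟩
  · ext i j
    rw [Matrix.gram_apply, ← RKHS.kernel_inner, RKHS.OfKernel.kernel_ofKernel]
    simp only [L, Matrix.map_apply, inner_smul_id_apply, hK.isHermitian.apply, star_one, one_mul,
      mul_one]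
  · rw [Submodule.dense_iff_topologicalClosure_eq_top, eq_top_iff, ← RKHS.kerFun_dense H]
    refine Submodule.topologicalClosure_mono (Submodule.span_le.2 ?_)
    rintro _ ⟨i, c, rfl⟩
    rw [kerFun_eq_smul]
    exact Submodule.smul_mem _ _ (Submodule.subset_span ⟨i, rfl⟩)

theorem denseRange_linearCombination {X H : Type*} [NormedAddCommGroup H] [NormedSpace 𝕜 H]
    {v : X → H} (hv : Dense (Submodule.span 𝕜 (Set.range v) : Set H)) :
    DenseRange (Finsupp.linearCombination 𝕜 v) := by
  rwa [DenseRange, ← LinearMap.coe_range, Finsupp.range_linearCombination]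

theorem exists_linearIsometryEquiv_of_gram_eq {X H H' : Type*}
    [NormedAddCommGroup H] [InnerProductSpace 𝕜 H] [CompleteSpace H]
    [NormedAddCommGroup H'] [InnerProductSpace 𝕜 H'] [CompleteSpace H']
    {v : X → H} {v' : X → H'} (hv : Dense (Submodule.span 𝕜 (Set.range v) : Set H))
    (hv' : Dense (Submodule.span 𝕜 (Set.range v') : Set H'))
    (hgram : Matrix.gram 𝕜 v = Matrix.gram 𝕜 v') :
    ∃ U : H ≃ₗᵢ[𝕜] H', ∀ i, U (v i) = v' i := by
  let e := Finsupp.linearCombination 𝕜 v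
  let e' := Finsupp.linearCombination 𝕜 v'
  have hnorm (c : X →₀ 𝕜) : ‖e' (LinearEquiv.refl 𝕜 _ c)‖ = ‖e c‖ := by
    rw [norm_eq_sqrt_re_inner (𝕜 := 𝕜), norm_eq_sqrt_re_inner (𝕜 := 𝕜), LinearEquiv.refl_apply,
      inner_linearCombination_self, inner_linearCombination_self, hgram]
  let U := (LinearEquiv.refl 𝕜 (X →₀ 𝕜)).extendOfIsometry e e' (denseRange_linearCombination hv)
    (denseRange_linearCombination hv') hnorm
  refine ⟨U, fun i => ?_⟩
  calc U (v i) = U (e (Finsupp.single i 1)) := by simp [e]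
    _ = e' (Finsupp.single i 1) := LinearEquiv.extendOfIsometry_eq ..
    _ = v' i := by simp [e']

theorem tendsto_inner_zero_of_dense_span {ι X H : Type*} [NormedAddCommGroup H]
    [InnerProductSpace 𝕜 H] {l : Filter ι} {s : ι → H} {C : ℝ} (hs : ∀ k, ‖s k‖ ≤ C)
    {v : X → H} (hv : Dense (Submodule.span 𝕜 (Set.range v) : Set H))
    (hlim : ∀ i, Tendsto (fun k => inner 𝕜 (s k) (v i)) l (𝓝 0)) (y : H) :
    Tendsto (fun k => inner 𝕜 (s k) y) l (𝓝 0) := by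
  have hspan : ∀ y ∈ Submodule.span 𝕜 (Set.range v),
      Tendsto (fun k => inner 𝕜 (s k) y) l (𝓝 0) := fun y hy => by
    induction hy using Submodule.span_induction with
    | mem _ hx => obtain ⟨i, rfl⟩ := hx; exact hlim i
    | zero => simpa using tendsto_const_nhds
    | add _ _ _ _ hx hy => simpa [inner_add_right] using hx.add hy
    | smul c _ _ hx => simpa [inner_smul_right] using hx.const_mul c
  have hequi : Equicontinuous fun k y => inner 𝕜 (s k) y := by
    refine (LipschitzWith.uniformEquicontinuous _ C.toNNReal fun k => ?_).equicontinuous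
    refine (innerSL 𝕜 (s k)).lipschitz.weaken ?_
    rw [← NNReal.coe_le_coe, coe_nnnorm, innerSL_apply_norm]
    exact (hs k).trans (Real.le_coe_toNNReal C)
  exact (hequi.isClosed_setOfPred_tendsto continuous_const).closure_subset_iff.2 hspan (hv y)

end Gram

section Riesz

/-- The Fourier coefficients of the partial Riesz product `∏ j < J, (1 + cos (m j • t))`, as
functions on the dual group `G`: multiplying by one more factor averages the two translates
by `± m J` into the coefficient function. -/
noncomputable def rieszCoeff {G : Type*} [AddCommGroup G] [DecidableEq G] (m : ℕ → G) :
    ℕ → G → ℝ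
  | 0 => Pi.single 0 1
  | J + 1 => fun g => rieszCoeff m J g + (rieszCoeff m J (g + m J) + rieszCoeff m J (g - m J)) / 2

section Group

variable {G : Type*} [AddCommGroup G] [DecidableEq G] (m : ℕ → G)

theorem rieszCoeff_succ (J : ℕ) (g : G) :
    rieszCoeff m (J + 1) g =
      rieszCoeff m J g + (rieszCoeff m J (g + m J) + rieszCoeff m J (g - m J)) / 2 :=
  rfl

theorem exists_gram_eq_rieszCoeff (J : ℕ) :
    ∃ v : G → lp (fun _ : G => ℂ) 2,
      Matrix.gram ℂ v = .of fun i j => (rieszCoeff m J (j - i) : ℂ) := by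
  induction J with
  | zero =>
    refine ⟨fun i => lp.single 2 i 1, Matrix.ext fun i j => ?_⟩
    simp [rieszCoeff, lp.inner_single_left, Pi.single_apply, sub_eq_zero, eq_comm, apply_ite]
  | succ J ih =>
    obtain ⟨v, hv⟩ := ih
    have inner_v (i j : G) : inner ℂ (v i) (v j) = (rieszCoeff m J (j - i) : ℂ) :=
      congrFun₂ hv i j
    have half : ((√2 : ℝ) : ℂ)⁻¹ * ((√2 : ℝ) : ℂ)⁻¹ = 1 / 2 := by
      rw [← mul_inv, ← Complex.ofReal_mul, Real.mul_self_sqrt zero_le_two]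
      norm_num
    refine ⟨fun i => ((√2 : ℝ) : ℂ)⁻¹ • (v i + v (i + m J)), Matrix.ext fun i j => ?_⟩
    simp only [Matrix.gram_apply, Matrix.of_apply, inner_smul_left, inner_smul_right,
      inner_add_left, inner_add_right, inner_v, rieszCoeff_succ, map_inv₀, Complex.conj_ofReal]
    rw [show j + m J - i = j - i + m J by abel, show j - (i + m J) = j - i - m J by abel,
      add_sub_add_right_eq_sub, ← mul_add, ← mul_assoc, half]
    push_cast
    ring

end Group

/-- Sparse sequences of frequencies `m`, for which the integers `∑ j, ε j * m j` with finitely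
many nonzero `ε j ∈ {-1, 0, 1}` are distinct and so far apart that the coefficients of the
associated Riesz product can be read off factor by factor. The ratio `5` also makes these
coefficients vanish at distance at most `m j / 2` from `± 2 * m j`. -/
structure IsLacunary (m : ℕ → ℤ) : Prop where
  pos : 0 < m 0
  growth : ∀ j, 5 * m j ≤ m (j + 1)

namespace IsLacunary

variable {m : ℕ → ℤ}

theorem natCast_lt (hm : IsLacunary m) (j : ℕ) : (j : ℤ) < m j := by
  induction j with
  | zero => exact_mod_cast hm.pos
  | succ j ih =>
    have := hm.growth j
    omega

theorem strictMono (hm : IsLacunary m) : StrictMono m :=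
  strictMono_nat_of_lt_succ fun j => by
    have := hm.growth j
    have := hm.natCast_lt j
    omega

theorem exists_of_frequently {p : ℕ → Prop} (hp : ∃ᶠ n in atTop, p n) :
    ∃ m : ℕ → ℕ, IsLacunary (fun j => m j) ∧ ∀ j, p (m j) := by
  choose g le_g p_g using frequently_atTop.1 hp
  refine ⟨fun j => (fun r => g (5 * r + 1))^[j + 1] 0, ⟨?_, fun j => ?_⟩, fun j => ?_⟩
  · exact_mod_cast le_g 1
  · simp only [Function.iterate_succ_apply' _ (j + 1)]
    exact_mod_cast (Nat.le_succ _).trans (le_g _)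
  · simp only [Function.iterate_succ_apply' _ j]
    exact p_g _

theorem rieszCoeff_eq_zero (hm : IsLacunary m) (J : ℕ) :
    ∀ n : ℤ, m J ≤ 2 * n.natAbs → rieszCoeff m J n = 0 := by
  induction J with
  | zero =>
    intro n hn
    have := hm.pos
    exact Pi.single_eq_of_ne (by lia) _
  | succ J ih =>
    intro n hn
    have := hm.growth J
    have := hm.natCast_lt J
    rw [rieszCoeff_succ, ih n (by lia), ih (n + m J) (by lia), ih (n - m J) (by lia)]
    simp

theorem rieszCoeff_eq_of_le (hm : IsLacunary m) {n : ℤ} {J K : ℕ} (hJ : 2 * n.natAbs ≤ m J)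
    (hJK : J ≤ K) : rieszCoeff m K n = rieszCoeff m J n := by
  induction K, hJK using Nat.le_induction with
  | base => rfl
  | succ K hK ih =>
    have := hm.strictMono.monotone hK
    rw [rieszCoeff_succ, ih, hm.rieszCoeff_eq_zero K (n + m K) (by lia),
      hm.rieszCoeff_eq_zero K (n - m K) (by lia)]
    simp

end IsLacunary

/-- The Fourier coefficients of the full Riesz product with lacunary frequencies `m`, the
pointwise limit of `rieszCoeff m`. For lacunary `m` the sequence `rieszCoeff m J n` is constant
once `2 * n.natAbs ≤ m J`, which holds for `J = 2 * |n|` because `J < m J`. -/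
noncomputable def rieszLimit (m : ℕ → ℤ) (n : ℤ) : ℝ :=
  rieszCoeff m (2 * n.natAbs) n

theorem rieszLimit_zero (m : ℕ → ℤ) : rieszLimit m 0 = 1 := by
  simp [rieszLimit, rieszCoeff]

namespace IsLacunary

variable {m : ℕ → ℤ}

theorem rieszCoeff_eq_rieszLimit (hm : IsLacunary m) {n : ℤ} {J : ℕ} (hJ : 2 * n.natAbs ≤ m J) :
    rieszCoeff m J n = rieszLimit m n := by
  rcases le_total J (2 * n.natAbs) with h | h
  · exact (hm.rieszCoeff_eq_of_le hJ h).symm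
  · have := hm.natCast_lt (2 * n.natAbs)
    exact hm.rieszCoeff_eq_of_le (by lia) h

theorem tendsto_rieszCoeff (hm : IsLacunary m) (n : ℤ) :
    Tendsto (fun J => rieszCoeff m J n) atTop (𝓝 (rieszLimit m n)) := by
  refine tendsto_const_nhds.congr' ?_
  filter_upwards [eventually_ge_atTop (2 * n.natAbs)] with J hJ
  have := hm.natCast_lt J
  exact (hm.rieszCoeff_eq_rieszLimit (by lia)).symm

theorem posSemidef_rieszLimit (hm : IsLacunary m) :
    (Matrix.of fun i j => (rieszLimit m (j - i) : ℂ)).PosSemidef := by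
  refine posSemidef_of_tendsto (l := atTop)
    (L := fun J => .of fun i j => (rieszCoeff m J (j - i) : ℂ)) (fun J => ?_) fun i j => ?_
  · obtain ⟨v, hv⟩ := exists_gram_eq_rieszCoeff m J
    exact hv ▸ posSemidef_gram v
  · exact (Complex.continuous_ofReal.tendsto _).comp (hm.tendsto_rieszCoeff (j - i))

theorem rieszLimit_apply_frequency (hm : IsLacunary m) (k : ℕ) : rieszLimit m (m k) = 1 / 2 := by
  have := hm.growth k
  have := hm.natCast_lt k
  have coeff_zero : rieszCoeff m k 0 = 1 := by
    rw [hm.rieszCoeff_eq_rieszLimit (by simpa using by lia), rieszLimit_zero]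
  rw [← hm.rieszCoeff_eq_rieszLimit (J := k + 1) (by lia), rieszCoeff_succ, sub_self, coeff_zero,
    hm.rieszCoeff_eq_zero k (m k) (by lia), hm.rieszCoeff_eq_zero k (m k + m k) (by lia)]
  norm_num

theorem rieszLimit_sub_two_mul_frequency (hm : IsLacunary m) {k : ℕ} {p : ℤ}
    (hp : 2 * p.natAbs ≤ m k) : rieszLimit m (p - 2 * m k) = 0 := by
  have := hm.growth k
  rw [← hm.rieszCoeff_eq_rieszLimit (J := k + 1) (by lia), rieszCoeff_succ,
    hm.rieszCoeff_eq_zero k (p - 2 * m k) (by lia),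
    hm.rieszCoeff_eq_zero k (p - 2 * m k + m k) (by lia),
    hm.rieszCoeff_eq_zero k (p - 2 * m k - m k) (by lia)]
  simp

theorem tendsto_rieszLimit_sub_two_mul_frequency (hm : IsLacunary m) (p : ℤ) :
    Tendsto (fun k => rieszLimit m (p - 2 * m k)) atTop (𝓝 0) := by
  refine tendsto_const_nhds.congr' ?_
  filter_upwards [eventually_ge_atTop (2 * p.natAbs)] with k hk
  have := hm.natCast_lt k
  exact (hm.rieszLimit_sub_two_mul_frequency (by lia)).symm

end IsLacunary

end Riesz

section FlightVector

variable {𝕜 : Type w} [RCLike 𝕜]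

/-- A flight vector of `T`: its orbit tends weakly to zero along a strictly increasing sequence
of exponents. -/
def IsFlightVector {H : Type*} [NormedAddCommGroup H] [InnerProductSpace 𝕜 H] (T : H →L[𝕜] H)
    (x : H) : Prop :=
  ∃ n : ℕ → ℕ, StrictMono n ∧ ∀ y, Tendsto (fun j => inner 𝕜 ((T ^ n j) x) y) atTop (𝓝 0)

theorem exists_unitary_forall_apply_eq_succ {H : Type*} [NormedAddCommGroup H]
    [InnerProductSpace 𝕜 H] [CompleteSpace H] {v : ℤ → H} {c : ℤ → 𝕜}
    (hgram : Matrix.gram 𝕜 v = .of fun i j => c (j - i))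
    (hv : Dense (Submodule.span 𝕜 (Set.range v) : Set H)) :
    ∃ T ∈ unitary (H →L[𝕜] H), ∀ i, T (v i) = v (i + 1) := by
  have range_succ : Set.range (fun i => v (i + 1)) = Set.range v :=
    (Equiv.addRight (1 : ℤ)).surjective.range_comp v
  have gram_succ : Matrix.gram 𝕜 v = Matrix.gram 𝕜 fun i => v (i + 1) := by
    ext i j
    have gram_apply (i j : ℤ) : inner 𝕜 (v i) (v j) = c (j - i) := congrFun₂ hgram i j
    rw [Matrix.gram_apply, Matrix.gram_apply, gram_apply, gram_apply, add_sub_add_right_eq_sub]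
  obtain ⟨U, hU⟩ :=
    exists_linearIsometryEquiv_of_gram_eq hv (by rwa [range_succ]) gram_succ
  let T := Unitary.linearIsometryEquiv.symm U
  exact ⟨T, T.2, hU⟩

theorem pow_apply_of_forall_apply_eq_succ {R M : Type*} [Semiring R] [AddCommMonoid M]
    [Module R M] [TopologicalSpace M] {T : M →L[R] M} {v : ℤ → M}
    (hT : ∀ i, T (v i) = v (i + 1)) (k : ℕ) :
    (T ^ k) (v 0) = v k := by
  induction k with
  | zero => rfl
  | succ k ih => rw [pow_succ', mul_apply_eq_comp, ih, hT, Nat.cast_succ]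

theorem exists_unitary_isFlightVector {c : ℤ → 𝕜}
    (hc : (Matrix.of fun i j => c (j - i)).PosSemidef) {n : ℕ → ℕ} (hn : StrictMono n)
    (hlim : ∀ p, Tendsto (fun k => c (p - n k)) atTop (𝓝 0)) :
    ∃ (H : Type (max u w)) (_ : NormedAddCommGroup H) (_ : InnerProductSpace 𝕜 H)
      (_ : CompleteSpace H) (T : H →L[𝕜] H) (x : H), T ∈ unitary (H →L[𝕜] H) ∧
      IsFlightVector T x ∧ ∀ k : ℕ, inner 𝕜 x ((T ^ k) x) = c k := by
  obtain ⟨H, _, _, _, w, gram_w, dense_w⟩ :=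
    exists_gram_eq_of_posSemidef (hc.submatrix (ULift.down : ULift.{u} ℤ → ℤ))
  let v : ℤ → H := w ∘ ULift.up
  have gram_v : Matrix.gram 𝕜 v = .of fun i j => c (j - i) :=
    congrArg (·.submatrix ULift.up ULift.up) gram_w
  have inner_v (i j : ℤ) : inner 𝕜 (v i) (v j) = c (j - i) := congrFun₂ gram_v i j
  have dense_v : Dense (Submodule.span 𝕜 (Set.range v) : Set H) := by
    rwa [ULift.up_surjective.range_comp]
  have norm_v (i : ℤ) : ‖v i‖ = √(RCLike.re (c 0)) := by
    rw [norm_eq_sqrt_re_inner (𝕜 := 𝕜), inner_v, sub_self]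
  obtain ⟨T, T_mem, hT⟩ := exists_unitary_forall_apply_eq_succ gram_v dense_v
  have pow_T := pow_apply_of_forall_apply_eq_succ hT
  refine ⟨H, _, _, inferInstance, T, v 0, T_mem, ⟨n, hn, ?_⟩, fun k => ?_⟩
  · simp only [pow_T]
    refine tendsto_inner_zero_of_dense_span (fun k => (norm_v _).le) dense_v fun i => ?_
    simpa only [inner_v] using hlim i
  · rw [pow_T, inner_v, sub_zero]

theorem exists_unitary_isFlightVector_inner_eq_half {m : ℕ → ℕ}
    (hm : IsLacunary fun j => m j) :
    ∃ (H : Type u) (_ : NormedAddCommGroup H) (_ : InnerProductSpace ℂ H)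
      (_ : CompleteSpace H) (T : H →L[ℂ] H) (x : H), T ∈ unitary (H →L[ℂ] H) ∧
      IsFlightVector T x ∧ ∀ j, inner ℂ x ((T ^ m j) x) = 1 / 2 := by
  have strictMono_two_mul : StrictMono fun j => 2 * m j := fun i j hij =>
    Nat.mul_lt_mul_of_pos_left (by exact_mod_cast hm.strictMono hij) two_pos
  have tendsto_zero (p : ℤ) :
      Tendsto (fun k => (rieszLimit (m ·) (p - (2 * m k : ℕ)) : ℂ)) atTop (𝓝 0) := by
    exact_mod_cast (Complex.continuous_ofReal.tendsto _).comp
      (hm.tendsto_rieszLimit_sub_two_mul_frequency p)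
  obtain ⟨H, _, _, _, T, x, T_mem, hx, inner_x⟩ :=
    exists_unitary_isFlightVector.{u} (c := fun n => (rieszLimit (m ·) n : ℂ))
      hm.posSemidef_rieszLimit strictMono_two_mul tendsto_zero
  exact ⟨H, _, _, inferInstance, T, x, T_mem, hx, fun j => by
    rw [inner_x, hm.rieszLimit_apply_frequency j]
    norm_num⟩

theorem tendsto_zero_of_forall_isFlightVector {E : Type*} [NormedAddCommGroup E]
    [NormedSpace ℂ E] {b : ℕ → E}
    (h : ∀ (H : Type u) (_ : NormedAddCommGroup H) (_ : InnerProductSpace ℂ H)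
      (_ : CompleteSpace H) (T : H →L[ℂ] H), T ∈ unitary (H →L[ℂ] H) →
      ∀ x, IsFlightVector T x →
        Tendsto (fun n => (inner ℂ x ((T ^ n) x) : ℂ) • b n) atTop (𝓝 0)) :
    Tendsto b atTop (𝓝 0) := by
  rw [NormedAddGroup.tendsto_nhds_zero]
  by_contra! ⟨ε, ε_pos, frequently_le⟩
  obtain ⟨m, hm, le_norm⟩ := IsLacunary.exists_of_frequently frequently_le
  obtain ⟨H, _, _, _, T, x, T_mem, hx, inner_x⟩ :=
    exists_unitary_isFlightVector_inner_eq_half.{u} hm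
  have m_tendsto : Tendsto m atTop atTop :=
    StrictMono.tendsto_atTop fun i j hij => by exact_mod_cast hm.strictMono hij
  have half_smul_tendsto : Tendsto (fun j => (1 / 2 : ℂ) • b (m j)) atTop (𝓝 0) :=
    ((h H _ _ inferInstance T T_mem x hx).comp m_tendsto).congr fun j =>
      congrArg (· • b (m j)) (inner_x j)
  have b_tendsto : Tendsto (fun j => b (m j)) atTop (𝓝 0) := by
    simpa [smul_smul] using half_smul_tendsto.const_smul (2 : ℂ)
  exact ε_pos.not_ge (norm_zero (E := E) ▸ ge_of_tendsto' b_tendsto.norm le_norm)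

end FlightVector

theorem tendsto_inv_smul_of_tendsto_average {𝕜 E : Type*} [RCLike 𝕜] [NormedAddCommGroup E]
    [NormedSpace 𝕜 E] {b : ℕ → E} {L : E}
    (h : Tendsto (fun n : ℕ => (n : 𝕜)⁻¹ • ∑ k ∈ Icc 1 n, b k) atTop (𝓝 L)) :
    Tendsto (fun n : ℕ => (n : 𝕜)⁻¹ • b n) atTop (𝓝 0) := by
  rw [← tendsto_add_atTop_iff_nat 1]
  have ratio_tendsto : Tendsto (fun n : ℕ => (n : 𝕜) / (n + 1)) atTop (𝓝 1) := by
    simpa using tendsto_natCast_div_add_atTop (1 : 𝕜)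
  have difference_tendsto := ((tendsto_add_atTop_iff_nat 1).2 h).sub (ratio_tendsto.smul h)
  rw [one_smul, sub_self] at difference_tendsto
  refine difference_tendsto.congr fun n => ?_
  rcases eq_or_ne n 0 with rfl | hn
  · simp
  · rw [sum_Icc_succ_top (Nat.le_add_left 1 n), smul_smul, div_mul_eq_mul_div,
      mul_inv_cancel₀ (Nat.cast_ne_zero.2 hn), one_div, smul_add, Nat.cast_succ,
      add_sub_cancel_left]

theorem stmt9_general (a : ℕ → ℂ)
    (h : ∀ (H : Type u) (_ : NormedAddCommGroup H) (_ : InnerProductSpace ℂ H)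
      (_ : CompleteSpace H) (T : H →L[ℂ] H), T ∈ unitary (H →L[ℂ] H) →
      ∀ x : H, IsFlightVector T x →
        ∃ L : ℂ, Tendsto (fun n : ℕ => inner ℂ ((n : ℂ)⁻¹ • ∑ k ∈ Icc 1 n, a k • (T ^ k) x) x)
          atTop (𝓝 L)) :
    Tendsto (fun n : ℕ => ‖a n‖ / (n : ℝ)) atTop (𝓝 0) := by
  have tendsto_div : Tendsto (fun n : ℕ => (n : ℂ)⁻¹ • a n) atTop (𝓝 0) := by
    refine tendsto_zero_of_forall_isFlightVector.{u} fun H _ _ _ T hT x hx => ?_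
    obtain ⟨L, hL⟩ := h H _ _ inferInstance T hT x hx
    have average_eq (n : ℕ) : star (inner ℂ ((n : ℂ)⁻¹ • ∑ k ∈ Icc 1 n, a k • (T ^ k) x) x) =
        (n : ℂ)⁻¹ • ∑ k ∈ Icc 1 n, a k * inner ℂ x ((T ^ k) x) := by
      simp only [RCLike.star_def, inner_conj_symm, inner_smul_right, inner_sum, smul_eq_mul]
    have term_tendsto := tendsto_inv_smul_of_tendsto_average (hL.star.congr average_eq)
    exact term_tendsto.congr fun n => by simp only [smul_eq_mul]; ring
  simpa [norm_mul, div_eq_inv_mul] using tendsto_div.norm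

/-- Let `(a_n)` be a complex sequence. Suppose that for every complex Hilbert
space `H`, every unitary operator `T` on `H` and every flight vector `x` of `T` (i.e.
`T^{n_j} x → 0` weakly along some strictly increasing `(n_j)`), the averages
`(1/n) ∑_{k=1}^n a_k T^k x` converge weakly. Then `|a_n|/n → 0`. -/
theorem stmt9 (a : ℕ → ℂ)
    (h : ∀ (H : Type u) (_ : NormedAddCommGroup H) (_ : InnerProductSpace ℂ H)
      (_ : CompleteSpace H) (T : H →L[ℂ] H), T ∈ unitary (H →L[ℂ] H) →
      ∀ x : H,
        (∃ n : ℕ → ℕ, StrictMono n ∧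
          ∀ y : H, Tendsto (fun j : ℕ => (inner ℂ ((T ^ n j) x) y : ℂ)) atTop (nhds 0)) →
        ∃ z : H, ∀ y : H,
          Tendsto (fun n : ℕ =>
              (inner ℂ ((n : ℂ)⁻¹ • ∑ k ∈ Icc 1 n, a k • (T ^ k) x) y : ℂ))
            atTop (nhds (inner ℂ z y))) :
    Tendsto (fun n : ℕ => ‖a n‖ / (n : ℝ)) atTop (nhds 0) :=
  stmt9_general a fun H _ _ _ T hT x hx =>
    (h H _ _ inferInstance T hT x hx).imp' (inner ℂ · x) fun _ hz => hz x
end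

section
/- Let T be a power-bounded linear operator on a Banach space X and let x ∈ X. Then the following are equivalent: (i) (1/n)∑_{k=1}^n T^{p_k} x converges in norm; (ii) (1/N)∑_{k=1}^N Λ'(k) T^k x converges in norm; (iii) (1/N)∑_{k=1}^N Λ(k) T^k x converges in norm. Moreover, if one of these limits exists, all three limits are equal. -/
open Filter Finset

/-- The modified von Mangoldt function `Λ'(n) = log n` if `n` is prime, `0` otherwise. -/
noncomputable def LambdaPrime (n : ℕ) : ℝ := if n.Prime then Real.log n else 0

open MeasureTheory Real Topology
open scoped FourierTransform Convolution

/-!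
By the prime number theorem, `ψ N`, `θ N` and `π N * log N` are all `N + o(N)`. On `{1, …, N}` the
weights `Λ` and `log N` times the indicator of the primes both dominate `Λ'`, each with total excess
`o(N)`, so against a bounded sequence the three averages differ by `o(1)`.

The prime number theorem follows from the continuity of `-ζ'/ζ(s) - 1/(s - 1)` on `1 ≤ Re s` by
the Wiener–Ikehara theorem, in this form: a bounded slowly decreasing `F` whose Laplace transform
extends continuously to the imaginary axis tends to zero. Averages of `F` around `x` against a
band-limited kernel are Fourier coefficients of that extension, so they vanish as `x → ∞` by the
Riemann–Lebesgue lemma. A kernel concentrated near zero then shows that on every short interval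
far to the right `F` takes values below `ε` and values above `-ε`, and slow decrease propagates
these bounds to every point.
-/

/-- `K` is a band-limited approximate-identity kernel: a nonnegative function of integral one which
is the Fourier transform of the compactly supported continuous function `φ`. -/
structure IsBandlimitedKernel (φ : ℝ → ℂ) (K : ℝ → ℝ) : Prop where
  continuous : Continuous φ
  hasCompactSupport : HasCompactSupport φ
  fourier_eq : ∀ u, 𝓕 φ u = K u
  nonneg : ∀ u, 0 ≤ K u
  integrable : Integrable K
  integral_eq_one : ∫ u, K u = 1

lemma ofReal_re_fourier_ofReal_of_even {f : ℝ → ℝ} (hf : ∀ x, f (-x) = f x) (u : ℝ) :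
    (((𝓕 (fun x ↦ (f x : ℂ)) u).re : ℝ) : ℂ) = 𝓕 (fun x ↦ (f x : ℂ)) u := by
  rw [← Complex.conj_eq_iff_re, Real.fourier_real_eq, ← integral_conj,
    ← integral_neg_eq_self]
  refine integral_congr_ae (.of_forall fun x ↦ ?_)
  simp [Circle.smul_def, hf, ← Circle.coe_inv_eq_conj, ← AddChar.map_neg_eq_inv]

lemma isBandlimitedKernel_normalize {φ : ℝ → ℂ} {K : ℝ → ℝ} (hφ : Continuous φ)
    (hφs : HasCompactSupport φ) (hK : ∀ u, 𝓕 φ u = K u) (hK0 : ∀ u, 0 ≤ K u)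
    (hKi : Integrable K) (hKpos : 0 < ∫ u, K u) :
    IsBandlimitedKernel (fun y ↦ ((∫ u, K u : ℝ) : ℂ)⁻¹ • φ y)
      (fun u ↦ (∫ u, K u)⁻¹ * K u) where
  continuous := by fun_prop
  hasCompactSupport := hφs.mono fun y hy h0 ↦ hy (by simp [h0])
  fourier_eq u := by
    have := congrFun (VectorFourier.fourierIntegral_const_smul 𝐞 volume (innerₗ ℝ) φ
      ((∫ u, K u : ℝ) : ℂ)⁻¹) u
    refine this.trans ?_
    rw [Pi.smul_apply, smul_eq_mul, Complex.ofReal_mul, Complex.ofReal_inv, ← hK]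
    rfl
  nonneg u := mul_nonneg (inv_nonneg.2 hKpos.le) (hK0 u)
  integrable := hKi.const_mul _
  integral_eq_one := by rw [integral_const_mul, inv_mul_cancel₀ hKpos.ne']

lemma exists_isBandlimitedKernel : ∃ φ K, IsBandlimitedKernel φ K := by
  let B : ContDiffBump (0 : ℝ) := default
  let b : ℝ → ℂ := fun x ↦ (B x : ℂ)
  have hb : Continuous b := Complex.continuous_ofReal.comp B.continuous
  have hbs : HasCompactSupport b := B.hasCompactSupport.comp_left Complex.ofReal_zero
  have hbi : Integrable b := hb.integrable_of_hasCompactSupport hbs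
  let f : SchwartzMap ℝ ℂ :=
    𝓕 (hbs.toSchwartzMap (Complex.ofRealCLM.contDiff.comp B.contDiff))
  have hf : ⇑f = 𝓕 b := SchwartzMap.fourier_coe _
  let K : ℝ → ℝ := fun u ↦ (𝓕 b u).re ^ 2
  have hb𝓕 (u : ℝ) : ((𝓕 b u).re : ℂ) = 𝓕 b u := ofReal_re_fourier_ofReal_of_even B.neg u
  have hKc : Continuous K := (Complex.continuous_re.comp (hf ▸ f.continuous)).pow 2
  have hKi : Integrable K := (hf ▸ f.memLp 2 volume : MemLp (𝓕 b) 2).re.integrable_sq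
  have hK0 : K 0 ≠ 0 := by
    have : 𝓕 b 0 = ((∫ x, B x : ℝ) : ℂ) := by
      simp [Real.fourier_real_eq, b, integral_complex_ofReal]
    simpa [K, this] using B.integral_pos.ne'
  refine ⟨_, _, isBandlimitedKernel_normalize (φ := b ⋆[.mul ℂ ℂ] b) (K := K)
    (hbs.continuous_convolution_right _ hbi.locallyIntegrable hb) (hbs.convolution _ hbs)
    (fun u ↦ ?_) (fun u ↦ sq_nonneg _) hKi
    (integral_pos_of_integrable_nonneg_nonzero hKc hKi (fun u ↦ sq_nonneg _) hK0)⟩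
  rw [Real.fourier_mul_convolution_eq hbi hbi, ← hb𝓕, ← Complex.ofReal_mul, ← sq]

namespace IsBandlimitedKernel

variable {φ : ℝ → ℂ} {K : ℝ → ℝ}

lemma comp_mul (h : IsBandlimitedKernel φ K) {l : ℝ} (hl : 0 < l) :
    IsBandlimitedKernel (fun y ↦ φ (l⁻¹ * y)) (fun u ↦ l * K (l * u)) where
  continuous := h.continuous.comp (continuous_const_mul _)
  hasCompactSupport :=
    h.hasCompactSupport.comp_homeomorph (Homeomorph.mulLeft₀ _ (inv_ne_zero hl.ne'))
  fourier_eq u := by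
    have := Measure.integral_comp_mul_left (fun y ↦ 𝐞 (-(y * (l * u))) • φ y) l⁻¹
    rw [← Real.fourier_real_eq, h.fourier_eq, inv_inv, abs_of_pos hl, Complex.real_smul] at this
    rw [Complex.ofReal_mul, ← this, Real.fourier_real_eq]
    refine integral_congr_ae (.of_forall fun y ↦ ?_)
    simp only
    congr 3
    field_simp
  nonneg u := mul_nonneg hl.le (h.nonneg _)
  integrable := (h.integrable.comp_mul_left' hl.ne').const_mul l
  integral_eq_one := by
    rw [integral_const_mul, Measure.integral_comp_mul_left, h.integral_eq_one,
      abs_of_pos (inv_pos.2 hl), smul_eq_mul, mul_one, mul_inv_cancel₀ hl.ne']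

end IsBandlimitedKernel

lemma exists_isBandlimitedKernel_lt_integral {r η : ℝ} (hr : 0 < r) (hη : η < 1) :
    ∃ φ K, IsBandlimitedKernel φ K ∧ η < ∫ u in -r..r, K u := by
  obtain ⟨φ, K, h⟩ := exists_isBandlimitedKernel
  have hlim : Tendsto (fun l ↦ ∫ u in -(l * r)..l * r, K u) atTop (𝓝 1) :=
    h.integral_eq_one ▸ intervalIntegral_tendsto_integral h.integrable
      (tendsto_neg_atTop_atBot.comp (tendsto_id.atTop_mul_const hr)) (tendsto_id.atTop_mul_const hr)
  obtain ⟨l, hl, hl0⟩ := ((hlim.eventually_const_lt hη).and (eventually_gt_atTop 0)).exists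
  refine ⟨_, _, h.comp_mul hl0, ?_⟩
  rwa [intervalIntegral.integral_const_mul, intervalIntegral.mul_integral_comp_mul_left, mul_neg]

lemma fourier_fourierChar_smul {E : Type*} [NormedAddCommGroup E] [NormedSpace ℂ E]
    (f : ℝ → E) (x t : ℝ) :
    𝓕 (fun y ↦ 𝐞 (x * y) • f y) t = 𝓕 f (t - x) := by
  simp only [Real.fourier_real_eq, smul_smul, ← AddChar.map_add_eq_mul]
  refine integral_congr_ae (.of_forall fun y ↦ ?_)
  simp only
  congr 2
  ring

lemma tendsto_setIntegral_exp_neg_mul_smul {E : Type*} [NormedAddCommGroup E] [NormedSpace ℂ E]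
    {g : ℝ → E} (hg : IntegrableOn g (Set.Ioi 0)) :
    Tendsto (fun δ : ℝ ↦ ∫ t in Set.Ioi (0 : ℝ), Complex.exp (-δ * t) • g t) (𝓝[>] 0)
      (𝓝 (∫ t in Set.Ioi (0 : ℝ), g t)) := by
  refine tendsto_integral_filter_of_dominated_convergence (fun t ↦ ‖g t‖) ?_ ?_ hg.norm ?_
  · exact .of_forall fun δ ↦ AEStronglyMeasurable.smul (by fun_prop) hg.aestronglyMeasurable
  · filter_upwards [self_mem_nhdsWithin] with δ (hδ : 0 < δ)
    filter_upwards [ae_restrict_mem measurableSet_Ioi] with t (ht : 0 < t)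
    rw [norm_smul, Complex.norm_exp]
    refine mul_le_of_le_one_left (norm_nonneg _) (exp_le_one_iff.2 ?_)
    simpa using (mul_pos hδ ht).le
  · refine .of_forall fun t ↦ Tendsto.mono_left ?_ nhdsWithin_le_nhds
    exact Continuous.tendsto' (by fun_prop) _ _ (by simp)

/-- `G` continuously extends the Laplace transform of `F : (0, ∞) → E` from the open right
half-plane to its closure. Absolute convergence is not part of the notion: a divergent integral
takes the value `0`. -/
structure HasContinuousLaplaceExtension {E : Type*} [NormedAddCommGroup E] [NormedSpace ℂ E]
    (F : ℝ → E) (G : ℂ → E) : Prop where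
  aestronglyMeasurable : AEStronglyMeasurable F (volume.restrict (Set.Ioi 0))
  continuousOn : ContinuousOn G {z | 0 ≤ z.re}
  integral_eq : ∀ z : ℂ, 0 < z.re → ∫ t in Set.Ioi (0 : ℝ), Complex.exp (-z * t) • F t = G z

namespace HasContinuousLaplaceExtension

variable {E : Type*} [NormedAddCommGroup E] [NormedSpace ℂ E] {F : ℝ → E} {G : ℂ → E}
  {φ : ℝ → ℂ} {C : ℝ}

lemma neg (h : HasContinuousLaplaceExtension F G) : HasContinuousLaplaceExtension (-F) (-G) where
  aestronglyMeasurable := h.aestronglyMeasurable.neg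
  continuousOn := h.continuousOn.neg
  integral_eq z hz := by
    simp only [Pi.neg_apply, smul_neg, integral_neg, h.integral_eq z hz]

lemma integral_exp_neg_mul_smul_fourier_smul [CompleteSpace E]
    (h : HasContinuousLaplaceExtension F G) (hF : ∀ t, 0 < t → ‖F t‖ ≤ C) (hφ : Integrable φ)
    {δ : ℝ} (hδ : 0 < δ) :
    ∫ t in Set.Ioi (0 : ℝ), Complex.exp (-δ * t) • 𝓕 φ t • F t =
      ∫ y, φ y • G (δ + 2 * π * y * Complex.I) := by
  let g : ℝ → E := (Set.Ioi (0 : ℝ)).indicator fun t ↦ Complex.exp (-δ * t) • F t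
  have hg : Integrable g := by
    refine IntegrableOn.integrable_indicator ?_ measurableSet_Ioi
    exact (integrableOn_exp_mul_complex_Ioi (a := -δ) (by simpa) 0).smul_bdd C
      h.aestronglyMeasurable ((ae_restrict_mem measurableSet_Ioi).mono hF)
  have hg𝓕 (y : ℝ) : 𝓕 g y = G (δ + 2 * π * y * Complex.I) := by
    rw [← h.integral_eq _ (by simpa), ← integral_indicator measurableSet_Ioi, Real.fourier_real_eq]
    refine integral_congr_ae (.of_forall fun t ↦ ?_)
    by_cases ht : t ∈ Set.Ioi (0 : ℝ)
    · simp only [g, Set.indicator_of_mem ht, Circle.smul_def, Real.fourierChar_apply, smul_smul,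
        ← Complex.exp_add]
      congr 2
      push_cast
      ring
    · simp [g, Set.indicator_of_notMem ht]
  calc ∫ t in Set.Ioi (0 : ℝ), Complex.exp (-δ * t) • 𝓕 φ t • F t = ∫ t, 𝓕 φ t • g t := by
        simp only [← integral_indicator measurableSet_Ioi, g, Set.indicator_smul, smul_comm (𝓕 φ _)]
    _ = ∫ y, φ y • 𝓕 g y := by
        simpa using! VectorFourier.integral_fourierIntegral_smul_eq_flip (L := innerₗ ℝ)
          Real.continuous_fourierChar continuous_inner hφ hg
    _ = ∫ y, φ y • G (δ + 2 * π * y * Complex.I) := by simp only [hg𝓕]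

lemma integral_fourier_smul [CompleteSpace E] (h : HasContinuousLaplaceExtension F G)
    (hF : ∀ t, 0 < t → ‖F t‖ ≤ C) (hφ : Continuous φ) (hφs : HasCompactSupport φ)
    (hφ𝓕 : Integrable (𝓕 φ)) :
    ∫ t in Set.Ioi (0 : ℝ), 𝓕 φ t • F t = ∫ y, φ y • G (2 * π * y * Complex.I) := by
  have hright : Tendsto (fun δ : ℝ ↦ ∫ y, φ y • G (δ + 2 * π * y * Complex.I)) (𝓝[>] 0)
      (𝓝 (∫ y, φ y • G (2 * π * y * Complex.I))) := by
    have hG : ContinuousOn (fun p : ℝ × ℝ ↦ G (p.1 + 2 * π * p.2 * Complex.I))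
        (Set.Ici 0 ×ˢ Set.univ) :=
      h.continuousOn.comp (by fun_prop) fun p hp ↦ by simpa using hp
    have hcont : ContinuousOn (fun δ : ℝ ↦ ∫ y, φ y • G (δ + 2 * π * y * Complex.I)) (Set.Ici 0) :=
      continuousOn_integral_of_compact_support hφs
        ((hφ.comp continuous_snd).continuousOn.smul hG)
        fun δ y _ hy ↦ by simp [image_eq_zero_of_notMem_tsupport hy]
    simpa using (hcont 0 Set.self_mem_Ici).tendsto.mono_left
      (nhdsWithin_mono _ Set.Ioi_subset_Ici_self)
  have hint : IntegrableOn (fun t ↦ 𝓕 φ t • F t) (Set.Ioi 0) :=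
    hφ𝓕.integrableOn.smul_bdd C h.aestronglyMeasurable
      ((ae_restrict_mem measurableSet_Ioi).mono hF)
  refine tendsto_nhds_unique (tendsto_setIntegral_exp_neg_mul_smul hint) (hright.congr' ?_)
  filter_upwards [self_mem_nhdsWithin] with δ hδ
  exact (h.integral_exp_neg_mul_smul_fourier_smul hF
    (hφ.integrable_of_hasCompactSupport hφs) hδ).symm

lemma tendsto_integral_fourier_sub_smul [CompleteSpace E] (h : HasContinuousLaplaceExtension F G)
    (hF : ∀ t, 0 < t → ‖F t‖ ≤ C) (hφ : Continuous φ) (hφs : HasCompactSupport φ)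
    (hφ𝓕 : Integrable (𝓕 φ)) :
    Tendsto (fun x ↦ ∫ t in Set.Ioi (0 : ℝ), 𝓕 φ (t - x) • F t) atTop (𝓝 0) := by
  have hRL := (Real.zero_at_infty_fourier fun y : ℝ ↦ φ y • G (2 * π * y * Complex.I)).comp
    (tendsto_neg_atTop_atBot.mono_right atBot_le_cocompact)
  refine hRL.congr fun x ↦ ?_
  have hx := h.integral_fourier_smul hF (φ := fun y ↦ 𝐞 (x * y) • φ y)
    ((Real.continuous_fourierChar.comp (by fun_prop)).smul hφ) hφs.smul_left
    (by simpa only [funext (fourier_fourierChar_smul φ x)] using hφ𝓕.comp_sub_right x)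
  simp only [fourier_fourierChar_smul] at hx
  rw [hx, Function.comp_apply, Real.fourier_real_eq]
  refine integral_congr_ae (.of_forall fun y ↦ ?_)
  simp [mul_comm]

end HasContinuousLaplaceExtension

lemma mul_integral_le_setIntegral_comp_sub_mul {K g : ℝ → ℝ} {c r x : ℝ} (hK : ∀ u, 0 ≤ K u)
    (hKi : Integrable K) (hKg : IntegrableOn (fun t ↦ K (t - x) * g t) (Set.Ioi 0))
    (hg : ∀ t, 0 < t → 0 ≤ g t) (hr : 0 ≤ r) (hrx : r ≤ x)
    (hc : ∀ t ∈ Set.Icc (x - r) (x + r), c ≤ g t) :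
    c * (∫ u in -r..r, K u) ≤ ∫ t in Set.Ioi 0, K (t - x) * g t := by
  have hpos : Set.Ioc (x - r) (x + r) ⊆ Set.Ioi 0 := fun t ht ↦
    (sub_nonneg.2 hrx).trans_lt ht.1
  calc c * (∫ u in -r..r, K u)
      = ∫ t in Set.Ioc (x - r) (x + r), K (t - x) * c := by
        rw [integral_mul_const, mul_comm, ← intervalIntegral.integral_of_le (by linarith),
          intervalIntegral.integral_comp_sub_right]
        congr 2 <;> ring
    _ ≤ ∫ t in Set.Ioc (x - r) (x + r), K (t - x) * g t :=
        setIntegral_mono_on ((hKi.comp_sub_right x).integrableOn.mul_const _) (hKg.mono_set hpos)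
          measurableSet_Ioc fun t ht ↦
            mul_le_mul_of_nonneg_left (hc t (Set.Ioc_subset_Icc_self ht)) (hK _)
    _ ≤ ∫ t in Set.Ioi 0, K (t - x) * g t := by
        refine setIntegral_mono_set hKg ?_ hpos.eventuallyLE
        filter_upwards [ae_restrict_mem measurableSet_Ioi] with t (ht : 0 < t)
        exact mul_nonneg (hK _) (hg t ht)

lemma IsBandlimitedKernel.le_setIntegral_comp_sub_mul {φ : ℝ → ℂ} {K F : ℝ → ℝ} {C c r x : ℝ}
    (hK : IsBandlimitedKernel φ K) (hFm : AEStronglyMeasurable F (volume.restrict (Set.Ioi 0)))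
    (hF : ∀ t, 0 < t → |F t| ≤ C) (hr : 0 ≤ r) (hrx : r ≤ x)
    (hc : ∀ t ∈ Set.Icc (x - r) (x + r), c ≤ F t) :
    (c + C) * (∫ u in -r..r, K u) - C ≤ ∫ t in Set.Ioi 0, K (t - x) * F t := by
  have hKx : Integrable fun t ↦ K (t - x) := hK.integrable.comp_sub_right x
  have hKF : IntegrableOn (fun t ↦ K (t - x) * F t) (Set.Ioi 0) :=
    hKx.integrableOn.mul_bdd (c := C) hFm ((ae_restrict_mem measurableSet_Ioi).mono hF)
  have hKC : IntegrableOn (fun t ↦ K (t - x) * C) (Set.Ioi 0) := hKx.integrableOn.mul_const C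
  have hmass : ∫ t in Set.Ioi 0, K (t - x) ≤ 1 := by
    rw [← hK.integral_eq_one, ← integral_sub_right_eq_self K x]
    exact setIntegral_le_integral hKx (.of_forall fun t ↦ hK.nonneg _)
  -- `F` may be negative outside the window, so the window estimate is applied to `F + C ≥ 0`.
  have hwindow : (c + C) * (∫ u in -r..r, K u) ≤ ∫ t in Set.Ioi 0, K (t - x) * (F t + C) := by
    refine mul_integral_le_setIntegral_comp_sub_mul hK.nonneg hK.integrable ?_
      (fun t ht ↦ by linarith [neg_le_of_abs_le (hF t ht)]) hr hrx
      fun t ht ↦ by linarith [hc t ht]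
    simpa only [mul_add] using! hKF.add hKC
  have hshift : ∫ t in Set.Ioi 0, K (t - x) * (F t + C) =
      (∫ t in Set.Ioi 0, K (t - x) * F t) + (∫ t in Set.Ioi 0, K (t - x)) * C := by
    simp only [mul_add]
    rw [integral_add hKF hKC, integral_mul_const]
  have hC : 0 ≤ C := (abs_nonneg _).trans (hF 1 one_pos)
  linarith [mul_le_of_le_one_left hC hmass]

/-- Slow decrease in the sense of R. Schmidt: over short intervals far to the right, `F` drops
arbitrarily little. This is the Tauberian condition. -/
def IsSlowlyDecreasing (F : ℝ → ℝ) : Prop :=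
  ∀ ε > 0, ∃ δ > 0, ∀ᶠ x in atTop, ∀ t ∈ Set.Icc x (x + δ), F x - ε ≤ F t

lemma IsSlowlyDecreasing.sub_const {F : ℝ → ℝ} (hF : IsSlowlyDecreasing F) (A : ℝ) :
    IsSlowlyDecreasing fun x ↦ F x - A := fun ε hε ↦ by
  obtain ⟨δ, hδ, h⟩ := hF ε hε
  refine ⟨δ, hδ, h.mono fun x hx t ht ↦ ?_⟩
  linarith [hx t ht]

lemma isSlowlyDecreasing_mul_exp_neg {S : ℝ → ℝ} (hS : Monotone S) {C : ℝ}
    (hC : ∀ᶠ x in atTop, S x * rexp (-x) ≤ C) : IsSlowlyDecreasing fun x ↦ S x * rexp (-x) := by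
  intro ε hε
  refine ⟨ε / (|C| + 1), by positivity, hC.mono fun x hx t ht ↦ ?_⟩
  have hdecay : S x * rexp (-x) * rexp (-(t - x)) ≤ S t * rexp (-t) := by
    rw [mul_assoc, ← Real.exp_add, show -x + -(t - x) = -t by ring]
    exact mul_le_mul_of_nonneg_right (hS ht.1) (exp_pos _).le
  have hexp₀ : 0 ≤ 1 - rexp (-(t - x)) := by
    rw [sub_nonneg, exp_le_one_iff]
    linarith [ht.1]
  have hexp : 1 - rexp (-(t - x)) ≤ ε / (|C| + 1) := by
    linarith [add_one_le_exp (-(t - x)), ht.2]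
  have hloss : S x * rexp (-x) * (1 - rexp (-(t - x))) ≤ ε :=
    calc S x * rexp (-x) * (1 - rexp (-(t - x)))
        ≤ (|C| + 1) * (1 - rexp (-(t - x))) := by
          gcongr
          linarith [le_abs_self C]
      _ ≤ (|C| + 1) * (ε / (|C| + 1)) := by gcongr
      _ = ε := by field_simp
  simp only
  linarith

section Tauberian

variable {F : ℝ → ℝ} {G : ℂ → ℂ} {C : ℝ}

lemma HasContinuousLaplaceExtension.eventually_exists_lt
    (h : HasContinuousLaplaceExtension (fun t ↦ (F t : ℂ)) G)
    (hF : ∀ t, 0 < t → |F t| ≤ C) {ε r : ℝ} (hε : 0 < ε) (hr : 0 < r) :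
    ∀ᶠ x in atTop, ∃ t ∈ Set.Icc (x - r) (x + r), F t < ε := by
  have hC : 0 ≤ C := (abs_nonneg _).trans (hF 1 one_pos)
  -- `η = C / (ε + C)` is the mass for which the lower bound `(ε + C) * η - C` vanishes.
  have hη : C / (ε + C) < 1 := (div_lt_one (by positivity)).2 (by linarith)
  obtain ⟨φ, K, hK, hmass⟩ := exists_isBandlimitedKernel_lt_integral hr hη
  have hlim : Tendsto (fun x ↦ ∫ t in Set.Ioi 0, K (t - x) * F t) atTop (𝓝 0) := by
    have hφ𝓕 : Integrable (𝓕 φ) := by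
      rw [funext hK.fourier_eq]
      exact hK.integrable.ofReal
    have := h.tendsto_integral_fourier_sub_smul (by simpa using hF) hK.continuous
      hK.hasCompactSupport hφ𝓕
    simp only [hK.fourier_eq, smul_eq_mul, ← Complex.ofReal_mul, integral_complex_ofReal] at this
    exact Filter.tendsto_ofReal_iff.1 this
  have hgain : 0 < (ε + C) * (∫ u in -r..r, K u) - C := by
    rw [div_lt_iff₀ (by positivity)] at hmass
    linarith
  filter_upwards [hlim.eventually_lt_const hgain, eventually_ge_atTop r] with x hx hrx
  by_contra! hlarge
  have hFm : AEStronglyMeasurable F (volume.restrict (Set.Ioi 0)) := by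
    simpa using Complex.continuous_re.comp_aestronglyMeasurable h.aestronglyMeasurable
  exact hx.not_ge (hK.le_setIntegral_comp_sub_mul hFm hF hr.le hrx hlarge)

theorem IsSlowlyDecreasing.tendsto_zero (hslow : IsSlowlyDecreasing F)
    (h : HasContinuousLaplaceExtension (fun t ↦ (F t : ℂ)) G) (hF : ∀ t, 0 < t → |F t| ≤ C) :
    Tendsto F atTop (𝓝 0) := by
  have hneg : HasContinuousLaplaceExtension (fun t ↦ ((-F t : ℝ) : ℂ)) (-G) := by
    simpa using! h.neg
  refine tendsto_order.2 ⟨fun a ha ↦ ?_, fun a ha ↦ ?_⟩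
  · obtain ⟨δ, hδ, hslow⟩ := hslow (-a / 2) (by linarith)
    have hwindow := (tendsto_atTop_add_const_right atTop (-(δ / 2)) tendsto_id).eventually
      (hneg.eventually_exists_lt (by simpa using hF) (show 0 < -a / 2 by linarith) (half_pos hδ))
    have hslow' := (tendsto_atTop_add_const_right atTop (-δ) tendsto_id).eventually
      (eventually_forall_ge_atTop.2 hslow)
    filter_upwards [hwindow, hslow'] with x ⟨t, ht, hFt⟩ hx
    simp only [id, Set.mem_Icc] at ht hx
    linarith [hx t (by linarith) x ⟨by linarith, by linarith⟩]
  · obtain ⟨δ, hδ, hslow⟩ := hslow (a / 2) (by linarith)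
    have hwindow := (tendsto_atTop_add_const_right atTop (δ / 2) tendsto_id).eventually
      (h.eventually_exists_lt hF (half_pos ha) (half_pos hδ))
    filter_upwards [hwindow, hslow] with x ⟨t, ht, hFt⟩ hx
    simp only [id, Set.mem_Icc] at ht
    linarith [hx t ⟨by linarith, by linarith⟩]

end Tauberian

lemma ofReal_exp_cpow (t : ℝ) (w : ℂ) : (rexp t : ℂ) ^ w = Complex.exp (t * w) := by
  rw [Complex.cpow_def_of_ne_zero (by simp), ← Complex.ofReal_log (exp_pos t).le, log_exp]

lemma one_add_ne_zero_of_re_nonneg {z : ℂ} (hz : 0 ≤ z.re) : 1 + z ≠ 0 := fun h ↦ by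
  have := congrArg Complex.re h
  simp only [Complex.add_re, Complex.one_re, Complex.zero_re] at this
  linarith

section WienerIkehara

variable {S : ℝ → ℝ} {A C : ℝ} {H : ℂ → ℂ}

lemma abs_comp_exp_mul_exp_neg_le (hC : ∀ t, 1 ≤ t → |S t| ≤ C * t) {t : ℝ} (ht : 0 ≤ t) :
    |S (rexp t) * rexp (-t)| ≤ C := by
  rw [abs_mul, abs_exp, exp_neg, ← div_eq_mul_inv, div_le_iff₀ (exp_pos t)]
  exact hC _ (one_le_exp ht)

lemma integral_exp_neg_mul_comp_exp (S : ℝ → ℝ) (z : ℂ) :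
    ∫ t in Set.Ioi (0 : ℝ), Complex.exp (-z * t) * (S (rexp t) * rexp (-t) : ℝ) =
      ∫ t in Set.Ioi (1 : ℝ), S t * (t : ℂ) ^ (-(1 + z + 1)) := by
  rw [← Real.exp_zero, ← integral_comp_exp_Ioi]
  refine integral_congr_ae (.of_forall fun t ↦ ?_)
  have hexp_eq : Complex.exp (-z * t) * rexp (-t) =
      rexp t * Complex.exp (t * (-(1 + z + 1))) := by
    push_cast
    rw [← Complex.exp_add, ← Complex.exp_add]
    ring_nf
  simp only [Complex.real_smul, ofReal_exp_cpow, Complex.ofReal_mul]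
  linear_combination (S (rexp t) : ℂ) * hexp_eq

lemma integral_exp_neg_mul_comp_exp_sub (hS : Measurable S) (hC : ∀ t, 1 ≤ t → |S t| ≤ C * t)
    (A : ℝ) {z : ℂ} (hz : 0 < z.re) :
    ∫ t in Set.Ioi (0 : ℝ), Complex.exp (-z * t) • ((S (rexp t) * rexp (-t) - A : ℝ) : ℂ) =
      (∫ t in Set.Ioi (1 : ℝ), S t * (t : ℂ) ^ (-(1 + z + 1))) - A / z := by
  have hre : (-z).re < 0 := by simpa
  have hexp := integrableOn_exp_mul_complex_Ioi hre 0
  have hbdd : IntegrableOn (fun t : ℝ ↦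
      Complex.exp (-z * t) * (S (rexp t) * rexp (-t) : ℝ)) (Set.Ioi 0) := by
    refine hexp.mul_bdd (c := C) (by fun_prop) ?_
    filter_upwards [ae_restrict_mem measurableSet_Ioi] with t (ht : 0 < t)
    rw [Complex.norm_real]
    exact abs_comp_exp_mul_exp_neg_le hC ht.le
  simp only [smul_eq_mul, Complex.ofReal_sub, mul_sub]
  rw [integral_sub hbdd (hexp.mul_const _), integral_mul_const,
    integral_exp_mul_complex_Ioi hre, integral_exp_neg_mul_comp_exp]
  simp [div_eq_inv_mul]

lemma hasContinuousLaplaceExtension_comp_exp (hS : Measurable S)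
    (hC : ∀ t, 1 ≤ t → |S t| ≤ C * t) (hHc : ContinuousOn H {s | 1 ≤ s.re})
    (hH : ∀ s : ℂ, 1 < s.re →
      H s = s * (∫ t in Set.Ioi (1 : ℝ), S t * (t : ℂ) ^ (-(s + 1))) - A / (s - 1)) :
    HasContinuousLaplaceExtension (fun t ↦ ((S (rexp t) * rexp (-t) - A : ℝ) : ℂ))
      (fun z ↦ (H (1 + z) - A) / (1 + z)) where
  aestronglyMeasurable := Measurable.aestronglyMeasurable (by fun_prop)
  continuousOn := by
    refine ContinuousOn.div ((hHc.comp (by fun_prop) fun z hz ↦ ?_).sub continuousOn_const)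
      (by fun_prop) fun z hz ↦ one_add_ne_zero_of_re_nonneg hz
    simpa using hz
  integral_eq z hz := by
    have hz0 : z ≠ 0 := by
      rintro rfl
      simp at hz
    have hz1 := one_add_ne_zero_of_re_nonneg hz.le
    rw [integral_exp_neg_mul_comp_exp_sub hS hC A hz, hH _ (by simpa), add_sub_cancel_left]
    -- The poles cancel: `(H (1 + z) + A / z) / (1 + z) - A / z = (H (1 + z) - A) / (1 + z)`.
    field_simp
    ring

theorem tendsto_div_of_mellin (hS : Monotone S)
    (hC : ∀ t, 1 ≤ t → |S t| ≤ C * t) (hHc : ContinuousOn H {s | 1 ≤ s.re})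
    (hH : ∀ s : ℂ, 1 < s.re →
      H s = s * (∫ t in Set.Ioi (1 : ℝ), S t * (t : ℂ) ^ (-(s + 1))) - A / (s - 1)) :
    Tendsto (fun x ↦ S x / x) atTop (𝓝 A) := by
  have hslow : IsSlowlyDecreasing fun t ↦ S (rexp t) * rexp (-t) - A := by
    refine (isSlowlyDecreasing_mul_exp_neg (hS.comp exp_monotone) (C := C) ?_).sub_const A
    filter_upwards [eventually_ge_atTop 0] with t ht
    exact (le_abs_self _).trans (abs_comp_exp_mul_exp_neg_le hC ht)
  have hlim := hslow.tendsto_zero (C := C + |A|)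
    (hasContinuousLaplaceExtension_comp_exp hS.measurable hC hHc hH)
    fun t ht ↦ (abs_sub _ _).trans (by gcongr; exact abs_comp_exp_mul_exp_neg_le hC ht.le)
  refine ((tendsto_sub_nhds_zero_iff.1 hlim).comp tendsto_log_atTop).congr' ?_
  filter_upwards [eventually_gt_atTop 0] with x hx
  simp [Real.exp_neg, exp_log hx, div_eq_mul_inv]

theorem tendsto_sum_div_of_LSeries {f : ℕ → ℝ} (hf : ∀ n, 0 ≤ f n)
    (hO : (fun n ↦ ∑ k ∈ Icc 1 n, f k) =O[atTop] fun n ↦ (n : ℝ))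
    (hHc : ContinuousOn H {s | 1 ≤ s.re})
    (hH : Set.EqOn H (fun s ↦ LSeries (fun n ↦ f n) s - A / (s - 1)) {s | 1 < s.re}) :
    Tendsto (fun N : ℕ ↦ (∑ k ∈ Icc 1 N, f k) / N) atTop (𝓝 A) := by
  obtain ⟨C, hC0, hC⟩ := Asymptotics.bound_of_isBigO_nat_atTop hO
  have hmono : Monotone fun t : ℝ ↦ ∑ k ∈ Icc 1 ⌊t⌋₊, f k := fun t u htu ↦
    Finset.sum_le_sum_of_subset_of_nonneg (Finset.Icc_subset_Icc_right (Nat.floor_mono htu))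
      fun k _ _ ↦ hf k
  have := tendsto_div_of_mellin hmono (C := C) (A := A) ?_ hHc ?_
  · simpa [Function.comp_def] using! this.comp tendsto_natCast_atTop_atTop
  · intro t ht
    have hfloor := hC (x := ⌊t⌋₊) (Nat.cast_ne_zero.2 (Nat.floor_pos.2 ht).ne')
    rw [Real.norm_eq_abs, Real.norm_natCast] at hfloor
    exact hfloor.trans (by gcongr; exact Nat.floor_le (by linarith))
  · intro s hs
    simp only [hH hs]
    rw [LSeries_eq_mul_integral_of_nonneg f zero_le_one hs (by simpa using hO) hf]
    push_cast
    rfl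

end WienerIkehara

lemma sum_Icc_vonMangoldt (N : ℕ) :
    ∑ k ∈ Icc 1 N, ArithmeticFunction.vonMangoldt k = Chebyshev.psi N := by
  rw [Chebyshev.psi, Nat.floor_natCast, ← Finset.Icc_add_one_left_eq_Ioc, zero_add]

theorem tendsto_sum_vonMangoldt_residueClass_div {q : ℕ} [NeZero q] {a : ZMod q} (ha : IsUnit a) :
    Tendsto (fun N : ℕ ↦ (∑ k ∈ Icc 1 N, ArithmeticFunction.vonMangoldt.residueClass a k) / N)
      atTop (𝓝 (q.totient : ℝ)⁻¹) := by
  have hnonneg := ArithmeticFunction.vonMangoldt.residueClass_nonneg a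
  refine tendsto_sum_div_of_LSeries hnonneg (.of_bound (log 4 + 4) (.of_forall fun N ↦ ?_))
    (ArithmeticFunction.vonMangoldt.continuousOn_LFunctionResidueClassAux a)
    (by simpa using! ArithmeticFunction.vonMangoldt.eqOn_LFunctionResidueClassAux ha)
  rw [norm_of_nonneg (Finset.sum_nonneg fun k _ ↦ hnonneg k), Real.norm_natCast]
  calc ∑ k ∈ Icc 1 N, ArithmeticFunction.vonMangoldt.residueClass a k
      ≤ ∑ k ∈ Icc 1 N, ArithmeticFunction.vonMangoldt k :=
        Finset.sum_le_sum fun k _ ↦ ArithmeticFunction.vonMangoldt.residueClass_le a k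
    _ = Chebyshev.psi N := sum_Icc_vonMangoldt N
    _ ≤ (log 4 + 4) * N := Chebyshev.psi_le_const_mul_self N.cast_nonneg

theorem tendsto_psi_div : Tendsto (fun N : ℕ ↦ Chebyshev.psi N / N) atTop (𝓝 1) := by
  have hres : ArithmeticFunction.vonMangoldt.residueClass (1 : ZMod 1) =
      ArithmeticFunction.vonMangoldt := by
    ext n
    simp [ArithmeticFunction.vonMangoldt.residueClass, Subsingleton.elim (n : ZMod 1) 1]
  simpa [hres, sum_Icc_vonMangoldt] using
    tendsto_sum_vonMangoldt_residueClass_div (isUnit_one (M := ZMod 1))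

theorem tendsto_psi_sub_theta_div :
    Tendsto (fun N : ℕ ↦ (Chebyshev.psi N - Chebyshev.theta N) / N) atTop (𝓝 0) := by
  have hsqrt : (fun x : ℝ ↦ √x) =o[atTop] fun x ↦ x := by
    refine Asymptotics.isLittleO_of_tendsto (by simp) ?_
    simpa only [sqrt_div_self] using! tendsto_inv_atTop_zero.comp tendsto_sqrt_atTop
  exact ((Chebyshev.isBigO_psi_sub_theta_sqrt.trans_isLittleO hsqrt).comp_tendsto
    tendsto_natCast_atTop_atTop).tendsto_div_nhds_zero

theorem tendsto_theta_div : Tendsto (fun N : ℕ ↦ Chebyshev.theta N / N) atTop (𝓝 1) := by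
  simpa [sub_div] using tendsto_psi_div.sub tendsto_psi_sub_theta_div

theorem tendsto_primeCounting_mul_log_sub_theta_div :
    Tendsto (fun N : ℕ ↦ (Nat.primeCounting N * log N - Chebyshev.theta N) / N) atTop (𝓝 0) := by
  have hO := (Chebyshev.primeCounting_sub_theta_div_log_isBigO.mul
    (Asymptotics.isBigO_refl (fun x ↦ log x / x) atTop)).comp_tendsto
      (tendsto_natCast_atTop_atTop (R := ℝ))
  have hlog : Tendsto (fun N : ℕ ↦ (log N)⁻¹) atTop (𝓝 0) :=
    tendsto_inv_atTop_zero.comp (tendsto_log_atTop.comp tendsto_natCast_atTop_atTop)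
  have hlog0 : ∀ᶠ N : ℕ in atTop, log N ≠ 0 :=
    (tendsto_log_atTop.comp tendsto_natCast_atTop_atTop).eventually_ne_atTop 0
  refine (hO.congr' ?_ ?_).trans_tendsto hlog
  · filter_upwards [hlog0] with N hN
    simp only [Function.comp_apply, Nat.floor_natCast]
    field_simp
  · filter_upwards [hlog0, eventually_ne_atTop 0] with N hN hN0
    simp only [Function.comp_apply]
    field_simp

theorem tendsto_primeCounting_mul_log_div :
    Tendsto (fun N : ℕ ↦ Nat.primeCounting N * log N / N) atTop (𝓝 1) := by
  simpa [← add_div] using tendsto_primeCounting_mul_log_sub_theta_div.add tendsto_theta_div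

lemma sum_range_primeCounting_nth {M : Type*} [AddCommMonoid M] (a : ℕ → M) (N : ℕ) :
    ∑ k ∈ range (Nat.primeCounting N), a (Nat.nth Nat.Prime k) =
      ∑ k ∈ Icc 1 N, if k.Prime then a k else 0 := by
  induction N with
  | zero => simp
  | succ N ih =>
    rw [Finset.sum_Icc_succ_top (by lia), ← ih, Nat.primeCounting, Nat.primeCounting',
      Nat.count_succ, Nat.primeCounting, Nat.primeCounting']
    split_ifs with hp
    · rw [Finset.sum_range_succ, Nat.nth_count hp]
    · simp

lemma sum_Icc_lambdaPrime (N : ℕ) : ∑ k ∈ Icc 1 N, LambdaPrime k = Chebyshev.theta N := by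
  rw [Chebyshev.theta, Nat.floor_natCast, Finset.sum_filter, ← Finset.Icc_add_one_left_eq_Ioc,
    zero_add]
  rfl

lemma lambdaPrime_le_vonMangoldt (k : ℕ) :
    LambdaPrime k ≤ ArithmeticFunction.vonMangoldt k := by
  rw [LambdaPrime]
  split_ifs with hp
  · exact (ArithmeticFunction.vonMangoldt_apply_prime hp).ge
  · exact ArithmeticFunction.vonMangoldt_nonneg

lemma lambdaPrime_le_of_mem_Icc {k N : ℕ} (hk : k ∈ Icc 1 N) :
    LambdaPrime k ≤ if k.Prime then log N else 0 := by
  rw [Finset.mem_Icc] at hk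
  rw [LambdaPrime]
  split_ifs
  · exact log_le_log (by exact_mod_cast hk.1) (by exact_mod_cast hk.2)
  · rfl

lemma tendsto_comp_primeCounting_iff {α : Type*} {l : Filter α} {u : ℕ → α} :
    Tendsto (fun N ↦ u (Nat.primeCounting N)) atTop l ↔ Tendsto u atTop l := by
  refine ⟨fun h ↦ ?_, fun h ↦ h.comp Nat.tendsto_primeCounting⟩
  rw [← tendsto_add_atTop_iff_nat 1]
  refine (h.comp (Nat.nth_strictMono Nat.infinite_setOfPred_prime).tendsto_atTop).congr fun n ↦ ?_
  exact congrArg u (Nat.count_nth_succ_of_infinite Nat.infinite_setOfPred_prime n)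

lemma tendsto_smul_iff_of_tendsto_one {α 𝕜 X : Type*} [NormedField 𝕜] [AddCommGroup X]
    [Module 𝕜 X] [TopologicalSpace X] [ContinuousSMul 𝕜 X] {l : Filter α} {c : α → 𝕜}
    (hc : Tendsto c l (𝓝 1)) {u : α → X} {y : X} :
    Tendsto (fun n ↦ c n • u n) l (𝓝 y) ↔ Tendsto u l (𝓝 y) := by
  refine ⟨fun h ↦ ?_, fun h ↦ by simpa using hc.smul h⟩
  have hinv := (hc.inv₀ one_ne_zero).smul h
  rw [inv_one, one_smul] at hinv
  refine hinv.congr' ?_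
  filter_upwards [hc.eventually_ne one_ne_zero] with n hn
  exact inv_smul_smul₀ hn _

section BoundedSequence

variable {𝕜 X : Type*} [RCLike 𝕜] [SeminormedAddCommGroup X] [NormedSpace 𝕜 X]
  {a : ℕ → X} {C : ℝ} {y : X}

lemma tendsto_weightedMean_iff {ι : Type*} {s : ℕ → Finset ι} {v w : ℕ → ι → ℝ} {b : ι → X}
    (hb : ∀ k, ‖b k‖ ≤ C) (hwv : ∀ N, ∀ k ∈ s N, w N k ≤ v N k)
    (hlim : Tendsto (fun N : ℕ ↦ (∑ k ∈ s N, v N k - ∑ k ∈ s N, w N k) / N) atTop (𝓝 0)) :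
    Tendsto (fun N : ℕ ↦ (N : 𝕜)⁻¹ • ∑ k ∈ s N, (v N k : 𝕜) • b k) atTop (𝓝 y) ↔
      Tendsto (fun N : ℕ ↦ (N : 𝕜)⁻¹ • ∑ k ∈ s N, (w N k : 𝕜) • b k) atTop (𝓝 y) := by
  refine tendsto_iff_of_dist (squeeze_zero (fun _ ↦ dist_nonneg) (fun N ↦ ?_)
    (by simpa using hlim.mul_const C))
  have hterm (k : ι) (hk : k ∈ s N) : ‖(v N k : 𝕜) • b k - (w N k : 𝕜) • b k‖ ≤
      (v N k - w N k) * C := by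
    rw [← sub_smul, ← RCLike.ofReal_sub, norm_smul,
      RCLike.norm_of_nonneg (sub_nonneg.2 (hwv N k hk))]
    exact mul_le_mul_of_nonneg_left (hb k) (sub_nonneg.2 (hwv N k hk))
  calc dist ((N : 𝕜)⁻¹ • ∑ k ∈ s N, (v N k : 𝕜) • b k)
        ((N : 𝕜)⁻¹ • ∑ k ∈ s N, (w N k : 𝕜) • b k)
      = (N : ℝ)⁻¹ * ‖∑ k ∈ s N, ((v N k : 𝕜) • b k - (w N k : 𝕜) • b k)‖ := by
        rw [dist_eq_norm, ← smul_sub, ← Finset.sum_sub_distrib, norm_smul, norm_inv,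
          RCLike.norm_natCast]
    _ ≤ (N : ℝ)⁻¹ * ∑ k ∈ s N, (v N k - w N k) * C := by
        gcongr
        exact norm_sum_le_of_le _ hterm
    _ = (∑ k ∈ s N, v N k - ∑ k ∈ s N, w N k) / N * C := by
        rw [← Finset.sum_mul, Finset.sum_sub_distrib]
        ring

lemma primeCounting_mul_log_div_smul_primeMean (a : ℕ → X) (N : ℕ) :
    ((Nat.primeCounting N * log N / N : ℝ) : 𝕜) • ((Nat.primeCounting N : 𝕜)⁻¹ •
        ∑ k ∈ range (Nat.primeCounting N), a (Nat.nth Nat.Prime k)) =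
      (N : 𝕜)⁻¹ • ∑ k ∈ Icc 1 N, ((if k.Prime then log N else 0 : ℝ) : 𝕜) • a k := by
  have hsum := sum_range_primeCounting_nth (fun k ↦ (log N : 𝕜) • a k) N
  rw [← Finset.smul_sum] at hsum
  simp only [apply_ite RCLike.ofReal, RCLike.ofReal_zero, ite_smul, zero_smul, ← hsum, smul_smul]
  rcases eq_or_ne (Nat.primeCounting N) 0 with hπ | hπ
  · simp [hπ]
  · have : (Nat.primeCounting N : 𝕜) ≠ 0 := by exact_mod_cast hπ
    congr 1
    push_cast
    field_simp

lemma tendsto_primeMean_iff_lambdaPrimeMean (ha : ∀ k, ‖a k‖ ≤ C) :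
    Tendsto (fun n : ℕ ↦ (n : 𝕜)⁻¹ • ∑ k ∈ range n, a (Nat.nth Nat.Prime k)) atTop (𝓝 y) ↔
      Tendsto (fun N : ℕ ↦ (N : 𝕜)⁻¹ • ∑ k ∈ Icc 1 N, (LambdaPrime k : 𝕜) • a k)
        atTop (𝓝 y) := by
  have hc : Tendsto (fun N : ℕ ↦ ((Nat.primeCounting N * log N / N : ℝ) : 𝕜)) atTop (𝓝 1) := by
    have := ((RCLike.continuous_ofReal (K := 𝕜)).tendsto 1).comp tendsto_primeCounting_mul_log_div
    rwa [RCLike.ofReal_one] at this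
  rw [← tendsto_comp_primeCounting_iff, ← tendsto_smul_iff_of_tendsto_one hc]
  simp only [primeCounting_mul_log_div_smul_primeMean]
  refine tendsto_weightedMean_iff ha (fun N k hk ↦ lambdaPrime_le_of_mem_Icc hk) ?_
  simp only [sum_Icc_lambdaPrime, ← sum_range_primeCounting_nth, Finset.sum_const, card_range,
    nsmul_eq_mul]
  exact tendsto_primeCounting_mul_log_sub_theta_div

lemma tendsto_vonMangoldtMean_iff_lambdaPrimeMean (ha : ∀ k, ‖a k‖ ≤ C) :
    Tendsto (fun N : ℕ ↦ (N : 𝕜)⁻¹ • ∑ k ∈ Icc 1 N,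
        ((ArithmeticFunction.vonMangoldt k : ℝ) : 𝕜) • a k) atTop (𝓝 y) ↔
      Tendsto (fun N : ℕ ↦ (N : 𝕜)⁻¹ • ∑ k ∈ Icc 1 N, (LambdaPrime k : 𝕜) • a k)
        atTop (𝓝 y) := by
  refine tendsto_weightedMean_iff ha (fun _ k _ ↦ lambdaPrime_le_vonMangoldt k) ?_
  simpa only [sum_Icc_vonMangoldt, sum_Icc_lambdaPrime] using tendsto_psi_sub_theta_div

end BoundedSequence

theorem stmt11_general {𝕜 X : Type*} [RCLike 𝕜] [SeminormedAddCommGroup X] [NormedSpace 𝕜 X]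
    {a : ℕ → X} {C : ℝ} (ha : ∀ k, ‖a k‖ ≤ C) (y : X) :
    (Tendsto (fun n : ℕ ↦ (n : 𝕜)⁻¹ • ∑ k ∈ range n, a (Nat.nth Nat.Prime k)) atTop (𝓝 y) ↔
      Tendsto (fun N : ℕ ↦ (N : 𝕜)⁻¹ • ∑ k ∈ Icc 1 N, (LambdaPrime k : 𝕜) • a k)
        atTop (𝓝 y)) ∧
    (Tendsto (fun n : ℕ ↦ (n : 𝕜)⁻¹ • ∑ k ∈ range n, a (Nat.nth Nat.Prime k)) atTop (𝓝 y) ↔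
      Tendsto (fun N : ℕ ↦ (N : 𝕜)⁻¹ • ∑ k ∈ Icc 1 N,
        ((ArithmeticFunction.vonMangoldt k : ℝ) : 𝕜) • a k) atTop (𝓝 y)) :=
  ⟨tendsto_primeMean_iff_lambdaPrimeMean ha,
    (tendsto_primeMean_iff_lambdaPrimeMean ha).trans
      (tendsto_vonMangoldtMean_iff_lambdaPrimeMean ha).symm⟩

/-- Let `T` be a power-bounded operator on a Banach space `X` and `x ∈ X`.
The following are equivalent (and the limits coincide):
(i) `(1/n) ∑_{k=1}^n T^{p_k} x` converges in norm;
(ii) `(1/N) ∑_{k=1}^N Λ'(k) T^k x` converges in norm;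
(iii) `(1/N) ∑_{k=1}^N Λ(k) T^k x` converges in norm.
This is expressed by saying that for each candidate limit `y`, convergence to `y` of any of the
three sequences is equivalent to convergence to `y` of the others. -/
theorem stmt11 {𝕜 : Type*} [RCLike 𝕜] {X : Type*} [NormedAddCommGroup X] [NormedSpace 𝕜 X]
    [CompleteSpace X] (T : X →L[𝕜] X) (hT : ∃ M : ℝ, ∀ n : ℕ, ‖T ^ n‖ ≤ M) (x : X) :
    ∀ y : X,
      (Tendsto (fun n : ℕ =>
          (n : 𝕜)⁻¹ • ∑ k ∈ range n, (T ^ (Nat.nth Nat.Prime k)) x) atTop (nhds y) ↔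
        Tendsto (fun N : ℕ =>
          (N : 𝕜)⁻¹ • ∑ k ∈ Icc 1 N, (LambdaPrime k : 𝕜) • (T ^ k) x) atTop (nhds y)) ∧
      (Tendsto (fun n : ℕ =>
          (n : 𝕜)⁻¹ • ∑ k ∈ range n, (T ^ (Nat.nth Nat.Prime k)) x) atTop (nhds y) ↔
        Tendsto (fun N : ℕ =>
          (N : 𝕜)⁻¹ • ∑ k ∈ Icc 1 N, ((ArithmeticFunction.vonMangoldt k : ℝ) : 𝕜) • (T ^ k) x)
          atTop (nhds y)) := by
  obtain ⟨M, hM⟩ := hT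
  exact stmt11_general (a := fun k ↦ (T ^ k) x) fun k ↦ (T ^ k).le_of_opNorm_le (hM k) x
end
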